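/- Fix 1 ≤ k < min(m,n) and let Φ : M_m ⊗ M_n → M_m ⊗ M_n be a linear map. The following are equivalent: (a) ‖Φ(X)‖_{S(k)} = ‖X‖_{S(k)} for all X ∈ M_m ⊗ M_n; (b) ‖Φ(X)‖_{γ,k} = ‖X‖_{γ,k} for all X ∈ M_m ⊗ M_n; (c) Φ is a composition of one or more of the following maps: X ↦ UXV where U and V are unitaries each of the form U₁ ⊗ U₂ (U₁ ∈ M_m, U₂ ∈ M_n unitary) or, when m = n, of the form S(U₁ ⊗ U₂) with S the swap operator defined by S(a ⊗ b) = b ⊗ a; the transpose map T; and, in the case k = 1 only, the partial transpose map id_m ⊗ T. -/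

import Mathlib

open scoped Kronecker ComplexOrder
open Matrix

namespace Ent

variable {ι κ : Type*} [Fintype ι] [Fintype κ]

/-- Inner product ⟨v,w⟩ = Σᵢ conj(v i) * (w i) (conjugate-linear in the first argument). -/
noncomputable def vinner (v w : ι → ℂ) : ℂ := dotProduct (star v) w

/-- An elementary (product) tensor a ⊗ b in ℂ^ι ⊗ ℂ^κ. -/
def prodVec (a : ι → ℂ) (b : κ → ℂ) : ι × κ → ℂ := fun p => a p.1 * b p.2

/-- `v` has Schmidt rank at most `k`. -/
def SchmidtRankLE (k : ℕ) (v : ι × κ → ℂ) : Prop :=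
  ∃ (a : Fin k → ι → ℂ) (b : Fin k → κ → ℂ), v = ∑ i, prodVec (a i) (b i)

/-- The rank-one operator |v⟩⟨w|. -/
noncomputable def ketBra (v : ι → ℂ) (w : κ → ℂ) : Matrix ι κ ℂ :=
  Matrix.vecMulVec v (star w)

/-- A finite family of vectors is orthonormal. -/
def Orthonormal' {N : Type*} [DecidableEq N] (v : N → ι → ℂ) : Prop :=
  ∀ i j, vinner (v i) (v j) = if i = j then 1 else 0

/-- The S(k)-norm of `X ∈ M_ι ⊗ M_κ`. -/
noncomputable def SkNorm (k : ℕ) (X : Matrix (ι × κ) (ι × κ) ℂ) : ℝ :=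
  sSup { r | ∃ v w : ι × κ → ℂ, vinner v v = 1 ∧ vinner w w = 1 ∧
    SchmidtRankLE k v ∧ SchmidtRankLE k w ∧
    r = ‖vinner v (X.mulVec w)‖ }

/-- The product numerical radius r_k^⊗. -/
noncomputable def prodRad (k : ℕ) (Y : Matrix (ι × κ) (ι × κ) ℂ) : ℝ :=
  sSup { r | ∃ v : ι × κ → ℂ, vinner v v = 1 ∧ SchmidtRankLE k v ∧
    r = ‖vinner v (Y.mulVec v)‖ }

/-- The norm ‖·‖_{γ,k}. -/
noncomputable def gammaNorm (k : ℕ) (X : Matrix (ι × κ) (ι × κ) ℂ) : ℝ :=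
  sInf { r | ∃ (N : ℕ) (c : Fin N → ℂ) (v w : Fin N → (ι × κ → ℂ)),
    (∀ i, vinner (v i) (v i) = 1 ∧ vinner (w i) (w i) = 1 ∧
      SchmidtRankLE k (v i) ∧ SchmidtRankLE k (w i)) ∧
    X = ∑ i, c i • ketBra (v i) (w i) ∧
    r = ∑ i, ‖c i‖ }

/-- `ρ` is a density matrix. -/
def IsDensity (ρ : Matrix ι ι ℂ) : Prop := ρ.PosSemidef ∧ ρ.trace = 1

/-- `ρ` has Schmidt number at most `k`: it is a convex combination of projections onto
unit vectors of Schmidt rank at most `k`. -/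
def SchmidtNumLE (k : ℕ) (ρ : Matrix (ι × κ) (ι × κ) ℂ) : Prop :=
  ∃ (N : ℕ) (p : Fin N → ℝ) (v : Fin N → (ι × κ → ℂ)),
    (∀ i, 0 ≤ p i ∧ vinner (v i) (v i) = 1 ∧ SchmidtRankLE k (v i)) ∧
    (∑ i, p i) = 1 ∧ ρ = ∑ i, p i • ketBra (v i) (v i)

/-- The robustness norm R_k on Hermitian operators. -/
noncomputable def Rk (k : ℕ) (Y : Matrix (ι × κ) (ι × κ) ℂ) : ℝ :=
  sInf { r | ∃ (c₁ c₂ : ℝ) (ρ₁ ρ₂ : Matrix (ι × κ) (ι × κ) ℂ),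
    0 ≤ c₁ ∧ 0 ≤ c₂ ∧ IsDensity ρ₁ ∧ IsDensity ρ₂ ∧
    SchmidtNumLE k ρ₁ ∧ SchmidtNumLE k ρ₂ ∧
    Y = c₁ • ρ₁ - c₂ • ρ₂ ∧ r = c₁ + c₂ }

/-- `Y` is k-block positive: ⟨v|Y|v⟩ ≥ 0 for every unit vector of Schmidt rank at most `k`. -/
def KBlockPos (k : ℕ) (Y : Matrix (ι × κ) (ι × κ) ℂ) : Prop :=
  ∀ v : ι × κ → ℂ, vinner v v = 1 → SchmidtRankLE k v →
    0 ≤ (vinner v (Y.mulVec v)).re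

/-- Dual of a norm on matrices, w.r.t. the Hilbert–Schmidt inner product ⟨W,X⟩ = Tr(Wᴴ X). -/
noncomputable def dualNormM (f : Matrix ι κ ℂ → ℝ) (X : Matrix ι κ ℂ) : ℝ :=
  sSup { r | ∃ W : Matrix ι κ ℂ, f W ≤ 1 ∧ r = ‖(Wᴴ * X).trace‖ }

/-- Dual of a norm, computed in the real Hilbert space of Hermitian matrices with the
Hilbert–Schmidt inner product ⟨W,Y⟩ = Tr(WY). -/
noncomputable def dualNormHerm (f : Matrix ι ι ℂ → ℝ) (Y : Matrix ι ι ℂ) : ℝ :=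
  sSup { r | ∃ W : Matrix ι ι ℂ, W.IsHermitian ∧ f W ≤ 1 ∧ r = |((W * Y).trace).re| }

/-- The Frobenius norm of a matrix. -/
noncomputable def frobNorm (X : Matrix ι κ ℂ) : ℝ :=
  Real.sqrt (∑ i, ∑ j, Complex.normSq (X i j))

/-- The (k,2)-norm: ‖X‖_{(k,2)} = sup { |Tr(XY)| : rank Y ≤ k, ‖Y‖_F ≤ 1 }. -/
noncomputable def kNorm (k : ℕ) (X : Matrix ι κ ℂ) : ℝ :=
  sSup { r | ∃ Y : Matrix κ ι ℂ, Y.rank ≤ k ∧ frobNorm Y ≤ 1 ∧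
    r = ‖(X * Y).trace‖ }

/-- The trace norm: the sum of the singular values, i.e. of the square roots of the
eigenvalues of Xᴴ X. -/
noncomputable def traceNorm [DecidableEq κ] (X : Matrix ι κ ℂ) : ℝ :=
  ∑ i, Real.sqrt ((Matrix.isHermitian_conjTranspose_mul_self X).eigenvalues i)

/-- The s(k) vector norm: sup of |⟨u,w⟩| over unit vectors u of Schmidt rank at most k. -/
noncomputable def skVecNorm (k : ℕ) (w : ι × κ → ℂ) : ℝ :=
  sSup { r | ∃ u : ι × κ → ℂ, vinner u u = 1 ∧ SchmidtRankLE k u ∧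
    r = ‖vinner u w‖ }

/-- Dual of a norm on vectors. -/
noncomputable def dualNormV (f : (ι × κ → ℂ) → ℝ) (v : ι × κ → ℂ) : ℝ :=
  sSup { r | ∃ w : ι × κ → ℂ, f w ≤ 1 ∧ r = ‖vinner w v‖ }

/-- The realignment map, L(X)_{(i,k),(j,l)} = X_{(i,j),(k,l)}. -/
def realign {m n : ℕ} (X : Matrix (Fin m × Fin n) (Fin m × Fin n) ℂ) :
    Matrix (Fin m × Fin m) (Fin n × Fin n) ℂ :=
  fun p q => X (p.1, q.1) (p.2, q.2)

/-- The projective tensor norm on M_{m,n} ⊗ M_{m,n}. -/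
noncomputable def projNorm {m n : ℕ} (Z : Matrix (Fin m × Fin m) (Fin n × Fin n) ℂ) : ℝ :=
  sInf { r | ∃ (N : ℕ) (A B : Fin N → Matrix (Fin m) (Fin n) ℂ),
    Z = ∑ i, A i ⊗ₖ B i ∧ r = ∑ i, traceNorm (A i) * traceNorm (B i) }


/-- The swap operator S(a ⊗ b) = b ⊗ a on ℂ^m ⊗ ℂ^n (meaningful when m = n). -/
def swapMat (m n : ℕ) : Matrix (Fin m × Fin n) (Fin m × Fin n) ℂ :=
  fun p q => if (p.1 : ℕ) = (q.2 : ℕ) ∧ (p.2 : ℕ) = (q.1 : ℕ) then 1 else 0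

/-- A unitary of the form U₁ ⊗ U₂, or (when m = n) S(U₁ ⊗ U₂) with S the swap operator. -/
def IsLocalUnitary (m n : ℕ) (U : Matrix (Fin m × Fin n) (Fin m × Fin n) ℂ) : Prop :=
  (∃ U₁ ∈ Matrix.unitaryGroup (Fin m) ℂ, ∃ U₂ ∈ Matrix.unitaryGroup (Fin n) ℂ,
    U = U₁ ⊗ₖ U₂) ∨
  (m = n ∧ ∃ U₁ ∈ Matrix.unitaryGroup (Fin m) ℂ, ∃ U₂ ∈ Matrix.unitaryGroup (Fin n) ℂ,
    U = swapMat m n * (U₁ ⊗ₖ U₂))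

/-- The partial transpose map id_m ⊗ T. -/
def ptrans {m n : ℕ} (X : Matrix (Fin m × Fin n) (Fin m × Fin n) ℂ) :
    Matrix (Fin m × Fin n) (Fin m × Fin n) ℂ :=
  fun p q => X (p.1, q.2) (q.1, p.2)

/-- The generating maps: X ↦ UXV with U, V local unitaries; the transpose; and, when
k = 1 only, the partial transpose. -/
inductive IsIsoGen (m n k : ℕ) :
    (Matrix (Fin m × Fin n) (Fin m × Fin n) ℂ → Matrix (Fin m × Fin n) (Fin m × Fin n) ℂ) →
      Prop
  | unitary (U V : Matrix (Fin m × Fin n) (Fin m × Fin n) ℂ)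
      (hU : IsLocalUnitary m n U) (hV : IsLocalUnitary m n V) :
      IsIsoGen m n k (fun X => U * X * V)
  | transpose : IsIsoGen m n k (fun X => Xᵀ)
  | ptranspose (h : k = 1) : IsIsoGen m n k ptrans

/-- Compositions of one or more of the generating maps. -/
inductive IsIsoComp (m n k : ℕ) :
    (Matrix (Fin m × Fin n) (Fin m × Fin n) ℂ → Matrix (Fin m × Fin n) (Fin m × Fin n) ℂ) →
      Prop
  | base (f) (h : IsIsoGen m n k f) : IsIsoComp m n k f
  | comp (f g) (hf : IsIsoComp m n k f) (hg : IsIsoComp m n k g) : IsIsoComp m n k (f ∘ g)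

/-!
The two norms are the support norm and the atomic norm of the compact set of operators `|v⟩⟨w|`
with `v`, `w` unit vectors of Schmidt rank at most `k`, so they are dual to each other for the
Hilbert–Schmidt inner product, and the adjoint of an isometry of one is an isometry of the other.
The atoms lie on the Euclidean sphere and have atomic norm `1`, which makes them exposed points of
the unit ball; hence the adjoint of an `S(k)`-isometry permutes the atoms.

Let `C j` be the cone of operators `v wᵀ` with `v`, `w` of Schmidt rank at most `j`. For
`j + 1 < min m n`, the directions of the lines in `C (j + 1)` through a nonzero point span the
tangent space of the rank-one operators exactly when the point lies in `C j`. A linear bijection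
preserving `C k` therefore preserves `C 1`, the elementary tensors with four factors. Such a map
permutes the four factors up to a linear isometry of each. Up to local unitaries and transposition
it is then the identity, the partial transpose or, when `m = n`, the realignment. The latter two
send some operator in `C 2` to one of rank two, so they occur only for `k = 1`, and realignment is
`X ↦ ptrans (X S) S` with `S` the swap operator.
-/

section Duality

open LinearMap (adjoint)
open Set

variable {𝕜 E : Type*} [RCLike 𝕜] [NormedAddCommGroup E] [InnerProductSpace 𝕜 E] {G : Set E}

/-- The norm `x ↦ sup {|⟪g, x⟫| : g ∈ G}` dual to a set `G` of atoms. -/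
noncomputable def supportNorm (𝕜 : Type*) {E : Type*} [RCLike 𝕜] [NormedAddCommGroup E]
    [InnerProductSpace 𝕜 E] (G : Set E) (x : E) : ℝ :=
  sSup ((fun g => ‖inner 𝕜 g x‖) '' G)

/-- The weights `∑ |cᵢ|` of the decompositions of `x` into multiples `cᵢ gᵢ` of atoms `gᵢ ∈ G`. -/
def atomicWeights (𝕜 : Type*) {E : Type*} [RCLike 𝕜] [NormedAddCommGroup E]
    [InnerProductSpace 𝕜 E] (G : Set E) (x : E) : Set ℝ :=
  {r | ∃ (N : ℕ) (c : Fin N → 𝕜) (g : Fin N → E),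
    (∀ i, g i ∈ G) ∧ x = ∑ i, c i • g i ∧ r = ∑ i, ‖c i‖}

/-- The gauge of the absolutely convex hull of the atoms `G`, as an infimum over decompositions. -/
noncomputable def atomicNorm (𝕜 : Type*) {E : Type*} [RCLike 𝕜] [NormedAddCommGroup E]
    [InnerProductSpace 𝕜 E] (G : Set E) (x : E) : ℝ :=
  sInf (atomicWeights 𝕜 G x)

/-- A compact set of unit vectors, stable under phases and spanning the space: the properties of
the rank-one operators `|v⟩⟨w|` of bounded Schmidt rank on which the duality between `supportNorm`
and `atomicNorm` rests. -/
structure IsAtomSet (𝕜 : Type*) {E : Type*} [RCLike 𝕜] [NormedAddCommGroup E]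
    [InnerProductSpace 𝕜 E] (G : Set E) : Prop where
  nonempty : G.Nonempty
  isCompact : IsCompact G
  norm_eq_one : ∀ g ∈ G, ‖g‖ = 1
  smul_mem : ∀ g ∈ G, ∀ c : 𝕜, ‖c‖ = 1 → c • g ∈ G
  span_eq_top : Submodule.span 𝕜 G = ⊤

namespace IsAtomSet

theorem norm_inner_le_norm (hG : IsAtomSet 𝕜 G) {g : E} (hg : g ∈ G) (x : E) :
    ‖inner 𝕜 g x‖ ≤ ‖x‖ := by
  simpa only [hG.norm_eq_one g hg, one_mul] using _root_.norm_inner_le_norm (𝕜 := 𝕜) g x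

theorem norm_inner_le_supportNorm (hG : IsAtomSet 𝕜 G) {g : E} (hg : g ∈ G) (x : E) :
    ‖inner 𝕜 g x‖ ≤ supportNorm 𝕜 G x :=
  le_csSup ⟨‖x‖, forall_mem_image.2 fun _ h => hG.norm_inner_le_norm h x⟩ (mem_image_of_mem _ hg)

theorem supportNorm_le (hG : IsAtomSet 𝕜 G) {x : E} {r : ℝ}
    (h : ∀ g ∈ G, ‖inner 𝕜 g x‖ ≤ r) : supportNorm 𝕜 G x ≤ r :=
  csSup_le (hG.nonempty.image _) (forall_mem_image.2 h)

theorem supportNorm_eq_one (hG : IsAtomSet 𝕜 G) {g : E} (hg : g ∈ G) :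
    supportNorm 𝕜 G g = 1 := by
  refine le_antisymm (hG.supportNorm_le fun g' hg' => ?_) ?_
  · exact (hG.norm_inner_le_norm hg' g).trans_eq (hG.norm_eq_one g hg)
  · simpa [inner_self_eq_norm_sq_to_K, hG.norm_eq_one g hg] using
      hG.norm_inner_le_supportNorm hg g

theorem exists_inner_eq_supportNorm (hG : IsAtomSet 𝕜 G) (x : E) :
    ∃ g ∈ G, inner 𝕜 g x = (supportNorm 𝕜 G x : 𝕜) := by
  have hcont : ContinuousOn (fun g => ‖inner 𝕜 g x‖) G := by fun_prop
  obtain ⟨g, hg, hsup, -⟩ := hG.isCompact.exists_sSup_image_eq_and_ge hG.nonempty hcont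
  obtain ⟨c, hc, hcg⟩ := RCLike.exists_norm_eq_mul_self (inner 𝕜 g x)
  refine ⟨star c • g, hG.smul_mem g hg _ (by rwa [norm_star]), ?_⟩
  rw [inner_smul_left, RCLike.star_def, RCLike.conj_conj, ← hcg, supportNorm, hsup]

theorem eq_zero_of_forall_inner_eq_zero (hG : IsAtomSet 𝕜 G) {x : E}
    (h : ∀ g ∈ G, inner 𝕜 g x = 0) : x = 0 := by
  have hle : Submodule.span 𝕜 G ≤ (𝕜 ∙ x)ᗮ := Submodule.span_le.2 fun g hg =>
    Submodule.mem_orthogonal_singleton_iff_inner_left.2 (h g hg)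
  have hx : x ∈ (𝕜 ∙ x)ᗮ := hle (hG.span_eq_top ▸ Submodule.mem_top)
  exact inner_self_eq_zero.1 (Submodule.mem_orthogonal_singleton_iff_inner_left.1 hx)

theorem supportNorm_eq_zero_iff (hG : IsAtomSet 𝕜 G) {x : E} :
    supportNorm 𝕜 G x = 0 ↔ x = 0 := by
  refine ⟨fun hx => hG.eq_zero_of_forall_inner_eq_zero fun g hg => ?_, ?_⟩
  · exact norm_le_zero_iff.1 (hx ▸ hG.norm_inner_le_supportNorm hg x)
  · rintro rfl
    simp [supportNorm, hG.nonempty.image_const]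

theorem nonempty_atomicWeights (hG : IsAtomSet 𝕜 G) (x : E) : (atomicWeights 𝕜 G x).Nonempty := by
  have hx : x ∈ Submodule.span 𝕜 G := hG.span_eq_top ▸ Submodule.mem_top
  obtain ⟨N, c, g, rfl⟩ := Submodule.mem_span_set'.1 hx
  exact ⟨_, N, c, fun i => g i, fun i => (g i).2, rfl, rfl⟩

end IsAtomSet

theorem bddBelow_atomicWeights (x : E) : BddBelow (atomicWeights 𝕜 G x) :=
  ⟨0, by rintro _ ⟨N, c, g, -, -, rfl⟩; positivity⟩

theorem atomicNorm_zero : atomicNorm 𝕜 G (0 : E) = 0 := by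
  have hmem : (0 : ℝ) ∈ atomicWeights 𝕜 G (0 : E) :=
    ⟨0, Fin.elim0, Fin.elim0, fun i => i.elim0, by simp, by simp⟩
  refine le_antisymm (csInf_le (bddBelow_atomicWeights 0) hmem) (Real.sInf_nonneg ?_)
  rintro _ ⟨N, c, g, -, -, rfl⟩
  positivity

theorem atomicNorm_le_one {g : E} (hg : g ∈ G) : atomicNorm 𝕜 G g ≤ 1 :=
  csInf_le (bddBelow_atomicWeights g) ⟨1, fun _ => 1, fun _ => g, fun _ => hg, by simp, by simp⟩

namespace IsAtomSet

theorem norm_inner_le_atomicNorm_mul_supportNorm (hG : IsAtomSet 𝕜 G) (x y : E) :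
    ‖inner 𝕜 x y‖ ≤ atomicNorm 𝕜 G x * supportNorm 𝕜 G y := by
  have hsup : 0 ≤ supportNorm 𝕜 G y :=
    Real.sSup_nonneg (forall_mem_image.2 fun _ _ => norm_nonneg _)
  rw [mul_comm, atomicNorm, ← smul_eq_mul, ← Real.sInf_smul_of_nonneg hsup]
  refine le_csInf (hG.nonempty_atomicWeights x).smul_set ?_
  rintro _ ⟨_, ⟨N, c, g, hg, rfl, rfl⟩, rfl⟩
  calc ‖inner 𝕜 (∑ i, c i • g i) y‖ ≤ ∑ i, ‖c i‖ * ‖inner 𝕜 (g i) y‖ := by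
        rw [sum_inner]
        exact (norm_sum_le _ _).trans_eq (by simp [inner_smul_left])
    _ ≤ ∑ i, ‖c i‖ * supportNorm 𝕜 G y := by
        gcongr with i
        exact hG.norm_inner_le_supportNorm (hg i) y
    _ = supportNorm 𝕜 G y * ∑ i, ‖c i‖ := by rw [Finset.mul_sum]; simp only [mul_comm]

theorem eq_zero_of_atomicNorm_eq_zero (hG : IsAtomSet 𝕜 G) {x : E} (hx : atomicNorm 𝕜 G x = 0) :
    x = 0 := by
  have h := hG.norm_inner_le_atomicNorm_mul_supportNorm x x
  rwa [hx, zero_mul, norm_le_zero_iff, inner_self_eq_zero] at h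

end IsAtomSet

theorem IsAtomSet.injective_of_supportNorm (hG : IsAtomSet 𝕜 G) {Φ : E →ₗ[𝕜] E}
    (h : ∀ x, supportNorm 𝕜 G (Φ x) = supportNorm 𝕜 G x) : Function.Injective Φ :=
  (injective_iff_map_eq_zero Φ).2 fun x hx => by
    rwa [← hG.supportNorm_eq_zero_iff, ← h, hG.supportNorm_eq_zero_iff]

theorem IsAtomSet.injective_of_atomicNorm (hG : IsAtomSet 𝕜 G) {Φ : E →ₗ[𝕜] E}
    (h : ∀ x, atomicNorm 𝕜 G (Φ x) = atomicNorm 𝕜 G x) : Function.Injective Φ :=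
  (injective_iff_map_eq_zero Φ).2 fun x hx =>
    hG.eq_zero_of_atomicNorm_eq_zero (by rw [← h, hx, atomicNorm_zero])

theorem supportNorm_map_of_image_eq (F : E ≃ₗᵢ[𝕜] E) (hF : F '' G = G) (x : E) :
    supportNorm 𝕜 G (F x) = supportNorm 𝕜 G x := by
  conv_lhs => rw [supportNorm, ← hF, image_image]
  simp only [F.inner_map_map, supportNorm]

theorem atomicNorm_map_of_image_eq (F : E ≃ₗᵢ[𝕜] E) (hF : F '' G = G) (x : E) :
    atomicNorm 𝕜 G (F x) = atomicNorm 𝕜 G x := by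
  have hsub : ∀ (H : E ≃ₗᵢ[𝕜] E), MapsTo H G G →
      ∀ y, atomicWeights 𝕜 G y ⊆ atomicWeights 𝕜 G (H y) := by
    rintro H hH y _ ⟨N, c, g, hg, rfl, rfl⟩
    exact ⟨N, c, fun i => H (g i), fun i => hH (hg i), by simp, rfl⟩
  have hFsymm : MapsTo F.symm G G := fun g hg => by
    obtain ⟨g', hg', rfl⟩ := hF.symm ▸ hg
    rwa [F.symm_apply_apply]
  have hback := hsub F.symm hFsymm (F x)
  rw [F.symm_apply_apply] at hback
  rw [atomicNorm, atomicNorm, hback.antisymm (hsub F (fun g hg => hF ▸ mem_image_of_mem F hg) x)]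

variable [FiniteDimensional 𝕜 E]

namespace IsAtomSet

theorem supportNorm_adjoint_le (hG : IsAtomSet 𝕜 G) {Φ : E →ₗ[𝕜] E}
    (h : ∀ x, atomicNorm 𝕜 G (Φ x) = atomicNorm 𝕜 G x) (y : E) :
    supportNorm 𝕜 G (adjoint Φ y) ≤ supportNorm 𝕜 G y := by
  refine hG.supportNorm_le fun g hg => ?_
  have hsup : 0 ≤ supportNorm 𝕜 G y := (norm_nonneg _).trans (hG.norm_inner_le_supportNorm hg y)
  calc ‖inner 𝕜 g (adjoint Φ y)‖ = ‖inner 𝕜 (Φ g) y‖ := by rw [LinearMap.adjoint_inner_right]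
    _ ≤ atomicNorm 𝕜 G (Φ g) * supportNorm 𝕜 G y := hG.norm_inner_le_atomicNorm_mul_supportNorm _ _
    _ ≤ supportNorm 𝕜 G y := mul_le_of_le_one_left hsup ((h g).trans_le (atomicNorm_le_one hg))

theorem supportNorm_adjoint (hG : IsAtomSet 𝕜 G) (Φ : E ≃ₗ[𝕜] E)
    (h : ∀ x, atomicNorm 𝕜 G (Φ x) = atomicNorm 𝕜 G x) (y : E) :
    supportNorm 𝕜 G (adjoint (Φ : E →ₗ[𝕜] E) y) = supportNorm 𝕜 G y := by
  have hsymm : ∀ x, atomicNorm 𝕜 G ((Φ.symm : E →ₗ[𝕜] E) x) = atomicNorm 𝕜 G x := fun x => by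
    rw [← h, LinearEquiv.coe_coe, Φ.apply_symm_apply]
  have hcomp : adjoint (Φ.symm : E →ₗ[𝕜] E) (adjoint (Φ : E →ₗ[𝕜] E) y) = y := by
    rw [← LinearMap.comp_apply, ← LinearMap.adjoint_comp, LinearEquiv.comp_symm,
      LinearMap.adjoint_id, LinearMap.id_apply]
  exact (hG.supportNorm_adjoint_le h y).antisymm
    (by simpa only [hcomp] using hG.supportNorm_adjoint_le hsymm (adjoint (Φ : E →ₗ[𝕜] E) y))

theorem norm_adjoint_le_one (hG : IsAtomSet 𝕜 G) {Φ : E →ₗ[𝕜] E}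
    (h : ∀ x, supportNorm 𝕜 G (Φ x) = supportNorm 𝕜 G x) {g : E} (hg : g ∈ G) :
    ‖adjoint Φ g‖ ≤ 1 := by
  set y := adjoint Φ g with hy
  have hsq : ‖y‖ ^ 2 ≤ ‖y‖ :=
    calc ‖y‖ ^ 2 = ‖inner 𝕜 y y‖ := by simp [inner_self_eq_norm_sq_to_K]
      _ = ‖inner 𝕜 g (Φ y)‖ := by rw [hy, LinearMap.adjoint_inner_left]
      _ ≤ supportNorm 𝕜 G y := (hG.norm_inner_le_supportNorm hg _).trans_eq (h y)
      _ ≤ ‖y‖ := hG.supportNorm_le fun g' hg' => hG.norm_inner_le_norm hg' y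
  nlinarith [norm_nonneg y]

-- `Φ⁻¹ g` is normed by an atom `g'`, and then `Φ⁻¹† g'` lies in the unit ball and has inner product
-- `1` with `g`, so it equals `g`.
theorem adjoint_mem (hG : IsAtomSet 𝕜 G) (Φ : E ≃ₗ[𝕜] E)
    (h : ∀ x, supportNorm 𝕜 G (Φ x) = supportNorm 𝕜 G x) {g : E} (hg : g ∈ G) :
    adjoint (Φ : E →ₗ[𝕜] E) g ∈ G := by
  have hsymm : ∀ x, supportNorm 𝕜 G ((Φ.symm : E →ₗ[𝕜] E) x) = supportNorm 𝕜 G x := fun x => by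
    rw [← h, LinearEquiv.coe_coe, Φ.apply_symm_apply]
  obtain ⟨g', hg', hinner⟩ := hG.exists_inner_eq_supportNorm (Φ.symm g)
  have hinner' : inner 𝕜 (adjoint (Φ.symm : E →ₗ[𝕜] E) g') g = 1 := by
    rw [LinearMap.adjoint_inner_left, LinearEquiv.coe_coe, hinner, ← LinearEquiv.coe_coe, hsymm,
      hG.supportNorm_eq_one hg, RCLike.ofReal_one]
  have hnorm : ‖adjoint (Φ.symm : E →ₗ[𝕜] E) g'‖ = 1 := by
    refine (hG.norm_adjoint_le_one hsymm hg').antisymm ?_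
    simpa [hinner', hG.norm_eq_one g hg] using
      _root_.norm_inner_le_norm (𝕜 := 𝕜) (adjoint (Φ.symm : E →ₗ[𝕜] E) g') g
  have hg_eq := (inner_eq_one_iff_of_norm_eq_one hnorm (hG.norm_eq_one g hg)).1 hinner'
  rwa [← hg_eq, ← LinearMap.comp_apply, ← LinearMap.adjoint_comp, LinearEquiv.symm_comp,
    LinearMap.adjoint_id, LinearMap.id_apply]

end IsAtomSet

end Duality

section Rank

variable {I J K : Type*} [Fintype J] [Field K]

theorem exists_eq_mul_rank (M : Matrix I J K) :
    ∃ (A : Matrix I (Fin M.rank) K) (B : Matrix (Fin M.rank) J K), M = A * B := by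
  classical
  let b : Module.Basis (Fin M.rank) K (LinearMap.range M.mulVecLin) := Module.finBasis K _
  let col (j : J) : LinearMap.range M.mulVecLin := M.mulVecLin.rangeRestrict (Pi.single j 1)
  refine ⟨of fun i l => (b l : I → K) i, of fun l j => b.repr (col j) l, ?_⟩
  ext i j
  have hcol := congrFun (congrArg Subtype.val (b.sum_repr (col j))) i
  simp only [AddSubmonoidClass.coe_finsetSum, Finset.sum_apply] at hcol
  simpa [mul_apply, mul_comm, col] using hcol.symm

/-- Wedderburn's rank reduction. -/
theorem rank_sub_smul_vecMulVec_lt [Fintype I] {M : Matrix I J K} {α : I → K} {β : J → K}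
    (h : α ⬝ᵥ M *ᵥ β ≠ 0) :
    (M - (α ⬝ᵥ M *ᵥ β)⁻¹ • vecMulVec (M *ᵥ β) (α ᵥ* M)).rank < M.rank := by
  set s := α ⬝ᵥ M *ᵥ β with hs
  set N := M - s⁻¹ • vecMulVec (M *ᵥ β) (α ᵥ* M) with hN
  have hN_apply (x : J → K) : N *ᵥ x = M *ᵥ (x - (s⁻¹ * (α ⬝ᵥ M *ᵥ x)) • β) := by
    rw [hN, sub_mulVec, smul_mulVec, vecMulVec_mulVec, mulVec_sub, mulVec_smul, mul_smul,
      dotProduct_mulVec]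
    simp
  have hαN (x : J → K) : α ⬝ᵥ N *ᵥ x = 0 := by
    rw [hN_apply, mulVec_sub, mulVec_smul, dotProduct_sub, dotProduct_smul, ← hs, smul_eq_mul]
    field_simp
    ring
  refine Submodule.finrank_lt_finrank_of_lt (lt_of_le_of_ne ?_ fun heq => ?_)
  · rintro _ ⟨x, rfl⟩
    exact ⟨_, (hN_apply x).symm⟩
  · obtain ⟨x, hx⟩ := heq.ge ⟨β, rfl⟩
    exact h ((congrArg (α ⬝ᵥ ·) hx).symm.trans (hαN x))

theorem isClosed_setOf_rank_le {𝕜 : Type*} [NontriviallyNormedField 𝕜] [CompleteSpace 𝕜]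
    [Finite I] (k : ℕ) : IsClosed {M : Matrix I J 𝕜 | M.rank ≤ k} := by
  have := Fintype.ofFinite I
  let L : Matrix I J 𝕜 →ₗ[𝕜] (J → 𝕜) →L[𝕜] (I → 𝕜) :=
    LinearMap.toContinuousLinearMap.toLinearMap ∘ₗ mulVecBilin 𝕜 𝕜
  have hopen := (isOpen_setOfPred_nat_le_rank (𝕜 := 𝕜) (E := J → 𝕜) (F := I → 𝕜) (k + 1)).preimage
    L.continuous_of_finiteDimensional
  convert hopen.isClosed_compl using 1
  ext M
  have hrank : (L M : (J → 𝕜) →ₗ[𝕜] (I → 𝕜)).rank = M.rank := (Module.finrank_eq_rank _ _).symm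
  simp [hrank, -Nat.cast_add]

-- After rank reduction along `α` and `β`, the pencil `X + t Z` has rank at most `j` for `t ≠ 0`
-- and still tends to `X` as `t → 0`.
theorem dotProduct_mulVec_eq_zero_of_rank_add_smul_le [Fintype I] {j : ℕ} {X Z : Matrix I J ℂ}
    {α : I → ℂ} {β : J → ℂ} (hα : α ᵥ* X = 0) (hβ : X *ᵥ β = 0) (hX : j < X.rank)
    (hZ : ∀ t : ℂ, (X + t • Z).rank ≤ j + 1) : α ⬝ᵥ Z *ᵥ β = 0 := by
  by_contra hne
  set W := Z - (α ⬝ᵥ Z *ᵥ β)⁻¹ • vecMulVec (Z *ᵥ β) (α ᵥ* Z)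
  have hrank : ∀ t ∈ ({0}ᶜ : Set ℂ), (X + t • W).rank ≤ j := by
    intro t ht
    have hαt : α ᵥ* (X + t • Z) = t • (α ᵥ* Z) := by rw [vecMul_add, hα, zero_add, vecMul_smul]
    have hβt : (X + t • Z) *ᵥ β = t • (Z *ᵥ β) := by rw [add_mulVec, hβ, zero_add, smul_mulVec]
    have hlt := rank_sub_smul_vecMulVec_lt (M := X + t • Z) (α := α) (β := β)
      (by rw [hβt, dotProduct_smul]; exact smul_ne_zero ht hne)
    have hW : t • W = t • Z - (t • (α ⬝ᵥ Z *ᵥ β))⁻¹ • t • t • vecMulVec (Z *ᵥ β) (α ᵥ* Z) := by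
      have ht0 : t ≠ 0 := ht
      simp only [W, smul_sub, smul_smul, smul_eq_mul]
      congr 2
      field_simp
    rw [hαt, hβt, dotProduct_smul, vecMulVec_smul, smul_vecMulVec, add_sub_assoc, ← hW] at hlt
    exact Nat.le_of_lt_succ (hlt.trans_le (hZ t))
  have hclosed : IsClosed {t : ℂ | (X + t • W).rank ≤ j} :=
    (isClosed_setOf_rank_le j).preimage (by fun_prop)
  have hzero : (0 : ℂ) ∈ {t : ℂ | (X + t • W).rank ≤ j} :=
    hclosed.closure_subset_iff.2 hrank (dense_compl_singleton (0 : ℂ) 0)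
  simp at hzero
  omega

end Rank

section SchmidtRank

variable {I J : Type*}

/-- The identification of `ℂ^I ⊗ ℂ^J` with matrices, under which Schmidt rank becomes rank. -/
def coeffMatrix : (I × J → ℂ) ≃ₗ[ℂ] Matrix I J ℂ :=
  (LinearEquiv.curry ℂ ℂ I J).trans (ofLinearEquiv ℂ)

theorem coeffMatrix_apply (v : I × J → ℂ) (i : I) (j : J) : coeffMatrix v i j = v (i, j) := rfl

theorem schmidtRankLE_prodVec (a : I → ℂ) (b : J → ℂ) : SchmidtRankLE 1 (prodVec a b) :=
  ⟨fun _ => a, fun _ => b, by simp⟩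

theorem schmidtRankLE_one_iff {v : I × J → ℂ} : SchmidtRankLE 1 v ↔ ∃ a b, v = prodVec a b := by
  constructor
  · rintro ⟨a, b, h⟩
    exact ⟨a 0, b 0, by simpa using h⟩
  · rintro ⟨a, b, rfl⟩
    exact schmidtRankLE_prodVec a b

theorem SchmidtRankLE.smul {k : ℕ} {v : I × J → ℂ} (hv : SchmidtRankLE k v) (c : ℂ) :
    SchmidtRankLE k (c • v) := by
  obtain ⟨a, b, rfl⟩ := hv
  refine ⟨fun i => c • a i, b, ?_⟩
  ext p
  simp [prodVec, Finset.mul_sum, mul_assoc]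

theorem SchmidtRankLE.star {k : ℕ} {v : I × J → ℂ} (hv : SchmidtRankLE k v) :
    SchmidtRankLE k (star v) := by
  obtain ⟨a, b, rfl⟩ := hv
  refine ⟨fun i => Star.star (a i), fun i => Star.star (b i), ?_⟩
  ext p
  simp [prodVec]

theorem SchmidtRankLE.add {j k : ℕ} {v w : I × J → ℂ} (hv : SchmidtRankLE j v)
    (hw : SchmidtRankLE k w) : SchmidtRankLE (j + k) (v + w) := by
  obtain ⟨a, b, rfl⟩ := hv
  obtain ⟨a', b', rfl⟩ := hw
  refine ⟨Fin.append a a', Fin.append b b', ?_⟩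
  rw [Fin.sum_univ_add]
  simp

theorem schmidtRankLE_zero (k : ℕ) : SchmidtRankLE k (0 : I × J → ℂ) :=
  ⟨0, 0, by ext p; simp [prodVec]⟩

theorem SchmidtRankLE.mono {j k : ℕ} {v : I × J → ℂ} (hv : SchmidtRankLE j v) (h : j ≤ k) :
    SchmidtRankLE k v := by
  obtain ⟨l, rfl⟩ := Nat.exists_eq_add_of_le h
  simpa using hv.add (schmidtRankLE_zero l)

theorem schmidtRankLE_single [DecidableEq I] [DecidableEq J] (p : I × J) :
    SchmidtRankLE 1 (Pi.single p (1 : ℂ)) := by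
  refine schmidtRankLE_one_iff.2 ⟨Pi.single p.1 1, Pi.single p.2 1, ?_⟩
  ext q
  simp only [prodVec, Pi.single_apply, Prod.ext_iff]
  split_ifs <;> simp_all

theorem schmidtRankLE_iff_rank_le [Fintype J] {k : ℕ} {v : I × J → ℂ} :
    SchmidtRankLE k v ↔ (coeffMatrix v).rank ≤ k := by
  constructor
  · rintro ⟨a, b, rfl⟩
    have hmul : coeffMatrix (∑ i, prodVec (a i) (b i)) = (of a)ᵀ * of b := by
      ext p q
      simp [coeffMatrix_apply, mul_apply, prodVec]
    rw [hmul]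
    exact (rank_mul_le_left _ _).trans ((rank_le_card_width _).trans_eq (Fintype.card_fin k))
  · intro hk
    obtain ⟨A, B, hAB⟩ := exists_eq_mul_rank (coeffMatrix v)
    refine SchmidtRankLE.mono ⟨A.col, B.row, ?_⟩ hk
    ext ⟨p, q⟩
    simpa [mul_apply, prodVec] using (coeffMatrix_apply v p q).symm.trans (congrFun₂ hAB p q)

theorem isClosed_setOf_schmidtRankLE [Finite I] [Finite J] (k : ℕ) :
    IsClosed {v : I × J → ℂ | SchmidtRankLE k v} := by
  cases nonempty_fintype J
  simp only [schmidtRankLE_iff_rank_le]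
  exact (isClosed_setOf_rank_le k).preimage
    (coeffMatrix (I := I) (J := J)).toLinearMap.continuous_of_finiteDimensional

end SchmidtRank

section Frobenius

open scoped Matrix.Norms.Frobenius
open WithLp (toLp)

variable {𝕜 A B : Type*} [RCLike 𝕜] [Fintype A] [Fintype B]

/-- The Hilbert–Schmidt inner product `tr (Xᴴ Y)`, which induces the Frobenius norm. -/
noncomputable abbrev hilbertSchmidt : InnerProductSpace 𝕜 (Matrix A B 𝕜) where
  inner X Y := (Xᴴ * Y).trace
  norm_sq_eq_re_inner X := by
    rw [frobenius_norm_def, ← Real.rpow_natCast, ← Real.rpow_mul (by positivity), trace,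
      Finset.sum_comm]
    simp only [diag_apply, mul_apply, conjTranspose_apply, RCLike.star_def, RCLike.conj_mul]
    norm_cast
    simp
  conj_inner_symm X Y := by
    rw [starRingEnd_apply, ← trace_conjTranspose, conjTranspose_mul, conjTranspose_conjTranspose]
  add_left X Y Z := by rw [conjTranspose_add, Matrix.add_mul, trace_add]
  smul_left X Y c := by rw [conjTranspose_smul, Matrix.smul_mul, trace_smul]; rfl

attribute [local instance] hilbertSchmidt

theorem frobenius_norm_vecMulVec (v : A → 𝕜) (w : B → 𝕜) :
    ‖vecMulVec v w‖ = ‖toLp 2 v‖ * ‖toLp 2 w‖ := by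
  rw [frobenius_norm_def, EuclideanSpace.norm_eq, EuclideanSpace.norm_eq, ← Real.sqrt_eq_rpow,
    ← Real.sqrt_mul (by positivity), Finset.sum_mul_sum]
  simp [vecMulVec_apply, mul_pow]

theorem vinner_eq_inner (v w : A → ℂ) : vinner v w = inner ℂ (toLp 2 v) (toLp 2 w) := by
  rw [vinner, EuclideanSpace.inner_toLp_toLp, dotProduct_comm]

theorem vinner_self_eq_one_iff {v : A → ℂ} : vinner v v = 1 ↔ ‖toLp 2 v‖ = 1 := by
  rw [vinner_eq_inner, inner_self_eq_norm_sq_to_K, RCLike.ofReal_eq_complex_ofReal]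
  exact_mod_cast pow_eq_one_iff_of_nonneg (norm_nonneg (toLp 2 v)) two_ne_zero

theorem norm_toLp_star (v : A → ℂ) : ‖toLp 2 (star v)‖ = ‖toLp 2 v‖ := by
  simp [EuclideanSpace.norm_eq]

theorem inner_ketBra (v : A → ℂ) (w : B → ℂ) (X : Matrix A B ℂ) :
    inner ℂ (ketBra v w) X = vinner v (X *ᵥ w) := by
  change ((vecMulVec v (star w))ᴴ * X).trace = star v ⬝ᵥ X *ᵥ w
  rw [conjTranspose_vecMulVec, star_star, vecMulVec_mul, trace_vecMulVec, dotProduct_comm,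
    dotProduct_mulVec]

end Frobenius

section Atoms

open scoped Matrix.Norms.Frobenius
open WithLp (toLp)

attribute [local instance] hilbertSchmidt

variable {I J : Type*} [Fintype I] [Fintype J] {k : ℕ}

/-- The unit vectors of Schmidt rank at most `k`. -/
def schmidtSphere (I J : Type*) [Fintype I] [Fintype J] (k : ℕ) : Set (I × J → ℂ) :=
  {v | vinner v v = 1 ∧ SchmidtRankLE k v}

/-- The operators `|v⟩⟨w|` with `v`, `w` unit vectors of Schmidt rank at most `k`; they are the
atoms of `gammaNorm k` and the functionals norming `SkNorm k`. -/
def schmidtAtoms (I J : Type*) [Fintype I] [Fintype J] (k : ℕ) :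
    Set (Matrix (I × J) (I × J) ℂ) :=
  Set.image2 ketBra (schmidtSphere I J k) (schmidtSphere I J k)

/-- The cone over `schmidtAtoms`, with the second vector not conjugated so that it is described by
polynomial equations. -/
def schmidtCone (I J : Type*) (k : ℕ) : Set (Matrix (I × J) (I × J) ℂ) :=
  Set.image2 vecMulVec {v | SchmidtRankLE k v} {w | SchmidtRankLE k w}

theorem isCompact_schmidtSphere : IsCompact (schmidtSphere I J k) := by
  have hsphere : IsCompact {v : I × J → ℂ | ‖toLp 2 v‖ = 1} := by
    convert (EuclideanSpace.equiv (I × J) ℂ).symm.toHomeomorph.isCompact_preimage.2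
      (isCompact_sphere (0 : EuclideanSpace ℂ (I × J)) 1) using 1
    ext v
    simp
  simpa only [schmidtSphere, vinner_self_eq_one_iff, Set.ofPred_and] using
    hsphere.inter_right (isClosed_setOf_schmidtRankLE k)

theorem single_mem_schmidtSphere [DecidableEq I] [DecidableEq J] (hk : 1 ≤ k) (p : I × J) :
    Pi.single p 1 ∈ schmidtSphere I J k :=
  ⟨by simp [vinner], (schmidtRankLE_single p).mono hk⟩

theorem norm_eq_one_of_mem_schmidtAtoms {X : Matrix (I × J) (I × J) ℂ}
    (hX : X ∈ schmidtAtoms I J k) : ‖X‖ = 1 := by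
  obtain ⟨v, hv, w, hw, rfl⟩ := hX
  rw [ketBra, frobenius_norm_vecMulVec, norm_toLp_star, vinner_self_eq_one_iff.1 hv.1,
    vinner_self_eq_one_iff.1 hw.1, one_mul]

theorem smul_mem_schmidtAtoms {c : ℂ} (hc : ‖c‖ = 1) {X : Matrix (I × J) (I × J) ℂ}
    (hX : X ∈ schmidtAtoms I J k) : c • X ∈ schmidtAtoms I J k := by
  obtain ⟨v, hv, w, hw, rfl⟩ := hX
  refine ⟨c • v, ⟨?_, hv.2.smul c⟩, w, hw, smul_vecMulVec c v _⟩
  rw [vinner_self_eq_one_iff, WithLp.toLp_smul, norm_smul, hc, vinner_self_eq_one_iff.1 hv.1,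
    one_mul]

theorem isAtomSet_schmidtAtoms [Nonempty I] [Nonempty J] (hk : 1 ≤ k) :
    IsAtomSet ℂ (schmidtAtoms I J k) where
  nonempty := by
    classical
    let p : I × J := Classical.arbitrary _
    exact ⟨_, Set.mem_image2_of_mem (single_mem_schmidtSphere hk p) (single_mem_schmidtSphere hk p)⟩
  isCompact := by
    rw [schmidtAtoms, ← Set.image_uncurry_prod]
    refine (isCompact_schmidtSphere.prod isCompact_schmidtSphere).image ?_
    exact Continuous.matrix_vecMulVec continuous_fst continuous_snd.star
  norm_eq_one _ := norm_eq_one_of_mem_schmidtAtoms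
  smul_mem _ hX _ hc := smul_mem_schmidtAtoms hc hX
  span_eq_top := by
    classical
    refine Submodule.eq_top_iff'.2 fun X => ?_
    rw [matrix_eq_sum_single X]
    refine sum_mem fun p _ => sum_mem fun q _ => ?_
    have hsingle : single p q (X p q) = X p q • ketBra (Pi.single p 1) (Pi.single q 1) := by
      rw [ketBra, ← Pi.single_star, star_one, ← single_eq_single_vecMulVec_single]
      simp
    rw [hsingle]
    exact Submodule.smul_mem _ _ (Submodule.subset_span
      ⟨_, single_mem_schmidtSphere hk p, _, single_mem_schmidtSphere hk q, rfl⟩)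

theorem SkNorm_eq_supportNorm (X : Matrix (I × J) (I × J) ℂ) :
    SkNorm k X = supportNorm ℂ (schmidtAtoms I J k) X := by
  rw [SkNorm, supportNorm, schmidtAtoms, Set.image_image2]
  congr 1
  ext r
  simp only [inner_ketBra, schmidtSphere, Set.mem_image2, Set.mem_ofPred_eq]
  constructor
  · rintro ⟨v, w, hv, hw, hvk, hwk, rfl⟩
    exact ⟨v, ⟨hv, hvk⟩, w, ⟨hw, hwk⟩, rfl⟩
  · rintro ⟨v, ⟨hv, hvk⟩, w, ⟨hw, hwk⟩, rfl⟩
    exact ⟨v, w, hv, hw, hvk, hwk, rfl⟩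

theorem gammaNorm_eq_atomicNorm (X : Matrix (I × J) (I × J) ℂ) :
    gammaNorm k X = atomicNorm ℂ (schmidtAtoms I J k) X := by
  rw [gammaNorm, atomicNorm, atomicWeights]
  congr 1
  ext r
  constructor
  · rintro ⟨N, c, v, w, hvw, hX, hr⟩
    exact ⟨N, c, fun i => ketBra (v i) (w i), fun i => ⟨v i, ⟨(hvw i).1, (hvw i).2.2.1⟩, w i,
      ⟨(hvw i).2.1, (hvw i).2.2.2⟩, rfl⟩, hX, hr⟩
  · rintro ⟨N, c, g, hg, rfl, rfl⟩
    choose v hv w hw hvw using hg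
    exact ⟨N, c, v, w, fun i => ⟨(hv i).1, (hw i).1, (hv i).2, (hw i).2⟩, by simp only [hvw], rfl⟩

theorem schmidtCone_mono {I J : Type*} {j k : ℕ} (h : j ≤ k) :
    schmidtCone I J j ⊆ schmidtCone I J k :=
  Set.image2_subset (fun _ hv => SchmidtRankLE.mono hv h) fun _ hw => SchmidtRankLE.mono hw h

theorem smul_mem_schmidtCone (c : ℂ) {X : Matrix (I × J) (I × J) ℂ} (hX : X ∈ schmidtAtoms I J k) :
    c • X ∈ schmidtCone I J k := by
  obtain ⟨v, hv, w, hw, rfl⟩ := hX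
  exact ⟨c • v, hv.2.smul c, star w, hw.2.star, smul_vecMulVec c v _⟩

theorem inv_norm_smul_mem_schmidtSphere {v : I × J → ℂ} (hv : SchmidtRankLE k v) (hv0 : v ≠ 0) :
    (‖toLp 2 v‖ : ℂ)⁻¹ • v ∈ schmidtSphere I J k := by
  refine ⟨?_, hv.smul _⟩
  rw [vinner_self_eq_one_iff, WithLp.toLp_smul, norm_smul, norm_inv, Complex.norm_real, norm_norm]
  exact inv_mul_cancel₀ (by simpa using hv0)

theorem exists_eq_smul_of_mem_schmidtCone {X : Matrix (I × J) (I × J) ℂ}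
    (hX : X ∈ schmidtCone I J k) (hX0 : X ≠ 0) : ∃ c : ℂ, ∃ g ∈ schmidtAtoms I J k, X = c • g := by
  obtain ⟨v, hv, w, hw, rfl⟩ := hX
  have hv0 : v ≠ 0 := by rintro rfl; simp at hX0
  have hw0 : w ≠ 0 := by rintro rfl; simp at hX0
  have hv' : (‖toLp 2 v‖ : ℂ) ≠ 0 := by simpa using hv0
  have hw' : (‖toLp 2 (star w)‖ : ℂ) ≠ 0 := by simpa using hw0
  refine ⟨‖toLp 2 v‖ * ‖toLp 2 (star w)‖, _, Set.mem_image2_of_mem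
    (inv_norm_smul_mem_schmidtSphere hv hv0)
    (inv_norm_smul_mem_schmidtSphere hw.star (star_ne_zero.2 hw0)), ?_⟩
  ext p q
  simp only [ketBra, vecMulVec_apply, Matrix.smul_apply, Pi.smul_apply, Pi.star_apply, smul_eq_mul,
    star_mul', star_inv₀, Complex.star_def, Complex.conj_ofReal, Complex.conj_conj]
  field_simp

theorem mem_schmidtAtoms_iff {X : Matrix (I × J) (I × J) ℂ} :
    X ∈ schmidtAtoms I J k ↔ X ∈ schmidtCone I J k ∧ ‖X‖ = 1 := by
  refine ⟨fun hX => ⟨?_, norm_eq_one_of_mem_schmidtAtoms hX⟩, fun ⟨hX, hX1⟩ => ?_⟩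
  · simpa only [one_smul] using smul_mem_schmidtCone 1 hX
  · obtain ⟨c, g, hg, rfl⟩ :=
      exists_eq_smul_of_mem_schmidtCone hX (norm_ne_zero_iff.1 (by simp [hX1]))
    rw [norm_smul, norm_eq_one_of_mem_schmidtAtoms hg, mul_one] at hX1
    exact smul_mem_schmidtAtoms hX1 hg

theorem mapsTo_schmidtCone_of_mapsTo_schmidtAtoms
    {Θ : Matrix (I × J) (I × J) ℂ →ₗ[ℂ] Matrix (I × J) (I × J) ℂ}
    (hΘ : Set.MapsTo Θ (schmidtAtoms I J k) (schmidtAtoms I J k)) :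
    Set.MapsTo Θ (schmidtCone I J k) (schmidtCone I J k) := by
  intro X hX
  rcases eq_or_ne X 0 with rfl | hX0
  · rwa [map_zero]
  · obtain ⟨c, g, hg, rfl⟩ := exists_eq_smul_of_mem_schmidtCone hX hX0
    rw [map_smul]
    exact smul_mem_schmidtCone c (hΘ hg)

theorem norm_map_of_mapsTo_schmidtAtoms
    {Θ : Matrix (I × J) (I × J) ℂ →ₗ[ℂ] Matrix (I × J) (I × J) ℂ}
    (hΘ : Set.MapsTo Θ (schmidtAtoms I J k) (schmidtAtoms I J k)) {X : Matrix (I × J) (I × J) ℂ}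
    (hX : X ∈ schmidtCone I J k) : ‖Θ X‖ = ‖X‖ := by
  rcases eq_or_ne X 0 with rfl | hX0
  · rw [map_zero]
  · obtain ⟨c, g, hg, rfl⟩ := exists_eq_smul_of_mem_schmidtCone hX hX0
    rw [map_smul, norm_smul, norm_smul, norm_eq_one_of_mem_schmidtAtoms (hΘ hg),
      norm_eq_one_of_mem_schmidtAtoms hg]

end Atoms

section Lines

variable {R K E F A B : Type*}

/-- The span of the directions of all lines through `x` contained in `C`. -/
def lineSpan (R : Type*) {E : Type*} [Ring R] [AddCommGroup E] [Module R E] (C : Set E) (x : E) :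
    Submodule R E :=
  Submodule.span R {z | ∀ t : R, x + t • z ∈ C}

theorem map_lineSpan_le [Ring R] [AddCommGroup E] [Module R E] [AddCommGroup F] [Module R F]
    {C : Set E} {D : Set F} (Θ : E →ₗ[R] F) (hΘ : Set.MapsTo Θ C D) (x : E) :
    (lineSpan R C x).map Θ ≤ lineSpan R D (Θ x) := by
  rw [lineSpan, Submodule.map_span_le]
  refine fun z hz => Submodule.subset_span fun t => ?_
  rw [← map_smul, ← map_add]
  exact hΘ (hz t)

variable [Field K]

/-- The differential `(x', y') ↦ x' yᵀ + x y'ᵀ` at `(x, y)` of the parametrisation of the rank-one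
matrices by pairs of vectors. -/
def tangentMap (x : A → K) (y : B → K) : (A → K) × (B → K) →ₗ[K] Matrix A B K :=
  ((vecMulVecBilin K K).flip y).coprod (vecMulVecBilin K K x)

theorem tangentMap_apply (x : A → K) (y : B → K) (z : (A → K) × (B → K)) :
    tangentMap x y z = vecMulVec z.1 y + vecMulVec x z.2 := rfl

theorem ker_tangentMap {x : A → K} {y : B → K} (hx : x ≠ 0) (hy : y ≠ 0) :
    LinearMap.ker (tangentMap x y) = Submodule.span K {(x, -y)} := by
  ext ⟨x', y'⟩
  rw [LinearMap.mem_ker, Submodule.mem_span_singleton, tangentMap_apply]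
  constructor
  · intro h
    have hpq (p q) : x' p * y q + x p * y' q = 0 := by simpa [vecMulVec_apply] using congrFun₂ h p q
    obtain ⟨p, hp⟩ := Function.ne_iff.1 hx
    obtain ⟨q, hq⟩ := Function.ne_iff.1 hy
    rw [Pi.zero_apply] at hp hq
    refine ⟨x' p / x p, Prod.ext (funext fun p' => ?_) (funext fun q' => ?_)⟩
    · simp only [Prod.smul_mk, Pi.smul_apply, smul_eq_mul]
      field_simp
      refine mul_right_cancel₀ hq ?_
      linear_combination x p' * hpq p q - x p * hpq p' q
    · simp only [Prod.smul_mk, Pi.smul_apply, Pi.neg_apply, smul_eq_mul]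
      field_simp
      linear_combination -hpq p q'
  · rintro ⟨c, hc⟩
    obtain ⟨rfl, rfl⟩ := Prod.ext_iff.1 hc
    simp [smul_vecMulVec, vecMulVec_smul, vecMulVec_neg]

theorem finrank_range_tangentMap [Fintype A] [Fintype B] {x : A → K} {y : B → K} (hx : x ≠ 0)
    (hy : y ≠ 0) :
    Module.finrank K (LinearMap.range (tangentMap x y)) + 1 = Fintype.card A + Fintype.card B := by
  have hker : Module.finrank K (LinearMap.ker (tangentMap x y)) = 1 := by
    rw [ker_tangentMap hx hy]
    exact finrank_span_singleton fun h => hx (congrArg Prod.fst h)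
  have hrank := LinearMap.finrank_range_add_finrank_ker (tangentMap x y)
  rwa [hker, Module.finrank_prod, Module.finrank_pi, Module.finrank_pi] at hrank

-- The coefficient of `t` in the vanishing `2 × 2` minors of `x yᵀ + t Z` shows that `Z` is tangent.
theorem mem_range_tangentMap_of_line [NeZero (2 : K)] {x : A → K} {y : B → K} (hx : x ≠ 0)
    (hy : y ≠ 0) {Z : Matrix A B K}
    (hZ : ∀ t : K, ∃ v w, vecMulVec v w = vecMulVec x y + t • Z) :
    Z ∈ LinearMap.range (tangentMap x y) := by
  obtain ⟨p, hp⟩ := Function.ne_iff.1 hx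
  obtain ⟨q, hq⟩ := Function.ne_iff.1 hy
  rw [Pi.zero_apply] at hp hq
  have hminor (t : K) (p' q') : (x p * y q + t * Z p q) * (x p' * y q' + t * Z p' q') =
      (x p * y q' + t * Z p q') * (x p' * y q + t * Z p' q) := by
    obtain ⟨v, w, hvw⟩ := hZ t
    have hentry (a b) : x a * y b + t * Z a b = v a * w b := by
      simpa [vecMulVec_apply] using (congrFun₂ hvw a b).symm
    rw [hentry, hentry, hentry, hentry]
    ring
  have hlinear (p' q') : x p * y q * Z p' q' + Z p q * (x p' * y q') =
      x p * y q' * Z p' q + Z p q' * (x p' * y q) := by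
    refine mul_left_cancel₀ (two_ne_zero (α := K)) ?_
    linear_combination hminor 1 p' q' - hminor (-1) p' q'
  refine ⟨(fun p' => (Z p' q - Z p q * x p' / x p) / y q, fun q' => Z p q' / x p), ?_⟩
  ext p' q'
  simp only [tangentMap_apply, Matrix.add_apply, vecMulVec_apply]
  field_simp
  linear_combination -hlinear p' q'

theorem exists_mulVec_eq_zero_of_rank_lt [Fintype B] {X : Matrix A B K}
    (hX : X.rank < Fintype.card B) : ∃ β ≠ 0, X *ᵥ β = 0 := by
  have hker : LinearMap.ker X.mulVecLin ≠ ⊥ := fun h => by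
    have := LinearMap.finrank_range_of_inj (LinearMap.ker_eq_bot.1 h)
    rw [Module.finrank_pi] at this
    exact hX.ne this
  obtain ⟨β, hβ, hβ0⟩ := Submodule.exists_mem_ne_zero_of_ne_bot hker
  exact ⟨β, hβ0, hβ⟩

end Lines

section Descent

variable {I J : Type*}

theorem lineSpan_schmidtCone_le {k : ℕ} {x y : I × J → ℂ} (hx : x ≠ 0) (hy : y ≠ 0) :
    lineSpan ℂ (schmidtCone I J k) (vecMulVec x y) ≤ LinearMap.range (tangentMap x y) :=
  Submodule.span_le.2 fun _ hZ => mem_range_tangentMap_of_line hx hy fun t =>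
    let ⟨v, _, w, _, hvw⟩ := hZ t
    ⟨v, w, hvw⟩

theorem transpose_mem_lineSpan_schmidtCone {k : ℕ} {X Z : Matrix (I × J) (I × J) ℂ}
    (hZ : Z ∈ lineSpan ℂ (schmidtCone I J k) X) : Zᵀ ∈ lineSpan ℂ (schmidtCone I J k) Xᵀ := by
  refine map_lineSpan_le (transposeLinearEquiv (I × J) (I × J) ℂ ℂ).toLinearMap ?_ X
    (Submodule.mem_map_of_mem hZ)
  rintro _ ⟨v, hv, w, hw, rfl⟩
  exact ⟨w, hw, v, hv, (transpose_vecMulVec v w).symm⟩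

variable {j : ℕ} {x y : I × J → ℂ}

theorem vecMulVec_mem_lineSpan_schmidtCone [Finite I] [Finite J] (hx : SchmidtRankLE j x)
    (hy : SchmidtRankLE (j + 1) y) (x' : I × J → ℂ) :
    vecMulVec x' y ∈ lineSpan ℂ (schmidtCone I J (j + 1)) (vecMulVec x y) := by
  classical
  cases nonempty_fintype (I × J)
  have hsum : vecMulVec x' y = ∑ p, x' p • vecMulVec (Pi.single p 1) y := by
    ext a b
    simp [Matrix.sum_apply, vecMulVec_apply, Pi.single_apply]
  rw [hsum]
  refine sum_mem fun p _ => Submodule.smul_mem _ _ (Submodule.subset_span fun t => ?_)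
  exact ⟨x + t • Pi.single p 1, hx.add ((schmidtRankLE_single p).smul t), y, hy,
    by rw [add_vecMulVec, smul_vecMulVec]⟩

theorem range_tangentMap_le_lineSpan_schmidtCone [Finite I] [Finite J]
    (hx : SchmidtRankLE j x) (hy : SchmidtRankLE j y) :
    LinearMap.range (tangentMap x y) ≤ lineSpan ℂ (schmidtCone I J (j + 1)) (vecMulVec x y) := by
  rintro _ ⟨⟨x', y'⟩, rfl⟩
  rw [tangentMap_apply]
  refine add_mem (vecMulVec_mem_lineSpan_schmidtCone hx (hy.mono j.le_succ) x') ?_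
  simpa only [transpose_vecMulVec] using transpose_mem_lineSpan_schmidtCone
    (vecMulVec_mem_lineSpan_schmidtCone hy (hx.mono j.le_succ) y')

variable [Fintype I] [Fintype J]

theorem dotProduct_coeffMatrix_col_eq_zero_of_mem_lineSpan {α : I → ℂ} {β : J → ℂ}
    (hα : α ᵥ* coeffMatrix x = 0) (hβ : coeffMatrix x *ᵥ β = 0) (hx : ¬SchmidtRankLE j x)
    {q : I × J} (hq : y q ≠ 0) {Z : Matrix (I × J) (I × J) ℂ}
    (hZ : Z ∈ lineSpan ℂ (schmidtCone I J (j + 1)) (vecMulVec x y)) :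
    α ⬝ᵥ coeffMatrix (Z.col q) *ᵥ β = 0 := by
  induction hZ using Submodule.span_induction with
  | zero =>
    have : coeffMatrix ((0 : Matrix (I × J) (I × J) ℂ).col q) = 0 := rfl
    simp [this]
  | add Z Z' _ _ hZ hZ' =>
    have : (Z + Z').col q = Z.col q + Z'.col q := rfl
    rw [this, map_add, add_mulVec, dotProduct_add, hZ, hZ', add_zero]
  | smul c Z _ hZ =>
    have : (c • Z).col q = c • Z.col q := rfl
    rw [this, map_smul, smul_mulVec, dotProduct_smul, hZ, smul_zero]
  | mem Z hZ =>
    refine dotProduct_mulVec_eq_zero_of_rank_add_smul_le hα hβ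
      (not_le.1 (schmidtRankLE_iff_rank_le.not.1 hx)) fun t => ?_
    obtain ⟨v, hv, w, -, hvw⟩ := hZ (t * y q)
    have hcol : x + t • Z.col q = ((y q)⁻¹ * w q) • v := by
      ext p
      have := congrFun₂ hvw p q
      simp only [vecMulVec_apply, Matrix.add_apply, Matrix.smul_apply, smul_eq_mul] at this
      simp only [Pi.smul_apply, Pi.add_apply, smul_eq_mul, col_apply]
      field_simp
      linear_combination -this
    rw [← map_smul, ← map_add, ← schmidtRankLE_iff_rank_le, hcol]
    exact SchmidtRankLE.smul hv _

theorem schmidtRankLE_of_forall_mem_lineSpan (hI : j + 1 < Fintype.card I)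
    (hJ : j + 1 < Fintype.card J) (hy : y ≠ 0) (hx : SchmidtRankLE (j + 1) x)
    (h : ∀ x', vecMulVec x' y ∈ lineSpan ℂ (schmidtCone I J (j + 1)) (vecMulVec x y)) :
    SchmidtRankLE j x := by
  by_contra hxj
  have hrank : (coeffMatrix x).rank ≤ j + 1 := schmidtRankLE_iff_rank_le.1 hx
  obtain ⟨β, hβ0, hβ⟩ := exists_mulVec_eq_zero_of_rank_lt (hrank.trans_lt hJ)
  obtain ⟨α, hα0, hα⟩ := exists_mulVec_eq_zero_of_rank_lt (X := (coeffMatrix x)ᵀ)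
    (by rw [rank_transpose]; exact hrank.trans_lt hI)
  rw [mulVec_transpose] at hα
  obtain ⟨q, hq⟩ := Function.ne_iff.1 hy
  have hzero := dotProduct_coeffMatrix_col_eq_zero_of_mem_lineSpan hα hβ hxj hq
    (h (prodVec (star α) (star β)))
  have hcol : coeffMatrix ((vecMulVec (prodVec (star α) (star β)) y).col q) =
      y q • vecMulVec (star α) (star β) := by
    ext a b
    simp [coeffMatrix_apply, prodVec, vecMulVec_apply, mul_comm]
  rw [hcol, smul_mulVec, vecMulVec_mulVec, dotProduct_smul, dotProduct_smul] at hzero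
  simp_all

theorem vecMulVec_mem_schmidtCone_of_range_tangentMap_le (hI : j + 1 < Fintype.card I)
    (hJ : j + 1 < Fintype.card J) (hx0 : x ≠ 0) (hy0 : y ≠ 0) (hx : SchmidtRankLE (j + 1) x)
    (hy : SchmidtRankLE (j + 1) y)
    (h : LinearMap.range (tangentMap x y) ≤
      lineSpan ℂ (schmidtCone I J (j + 1)) (vecMulVec x y)) :
    vecMulVec x y ∈ schmidtCone I J j := by
  refine ⟨x, schmidtRankLE_of_forall_mem_lineSpan hI hJ hy0 hx fun x' => h ⟨(x', 0), ?_⟩,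
    y, schmidtRankLE_of_forall_mem_lineSpan hI hJ hx0 hy fun y' => ?_, rfl⟩
  · simp [tangentMap_apply]
  · rw [← transpose_vecMulVec x y, ← transpose_vecMulVec x y']
    exact transpose_mem_lineSpan_schmidtCone (h ⟨(0, y'), by simp [tangentMap_apply]⟩)

-- The lines through a point of the smaller cone span the whole tangent space of the rank-one
-- matrices, and only at such points do they.
theorem mapsTo_schmidtCone_of_succ (hI : j + 1 < Fintype.card I) (hJ : j + 1 < Fintype.card J)
    {Θ : Matrix (I × J) (I × J) ℂ →ₗ[ℂ] Matrix (I × J) (I × J) ℂ} (hinj : Function.Injective Θ)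
    (hΘ : Set.MapsTo Θ (schmidtCone I J (j + 1)) (schmidtCone I J (j + 1))) :
    Set.MapsTo Θ (schmidtCone I J j) (schmidtCone I J j) := by
  intro X hX
  rcases eq_or_ne X 0 with rfl | hX0
  · rwa [map_zero]
  have hΘX0 : Θ X ≠ 0 := (map_ne_zero_iff Θ hinj).2 hX0
  obtain ⟨v, hv, w, hw, hvw⟩ := hΘ (schmidtCone_mono j.le_succ hX)
  obtain ⟨x, hx, y, hy, rfl⟩ := hX
  obtain ⟨hx0, hy0⟩ := not_or.1 (vecMulVec_eq_zero.not.1 hX0)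
  obtain ⟨hv0, hw0⟩ := not_or.1 (vecMulVec_eq_zero.not.1 (hvw ▸ hΘX0))
  rw [← hvw]
  refine vecMulVec_mem_schmidtCone_of_range_tangentMap_le hI hJ hv0 hw0 hv hw
    (Submodule.eq_of_le_of_finrank_le (lineSpan_schmidtCone_le hv0 hw0) ?_).ge
  have hdim : Module.finrank ℂ (LinearMap.range (tangentMap v w)) =
      Module.finrank ℂ (LinearMap.range (tangentMap x y)) :=
    Nat.succ_injective ((finrank_range_tangentMap hv0 hw0).trans
      (finrank_range_tangentMap hx0 hy0).symm)
  calc Module.finrank ℂ (LinearMap.range (tangentMap v w))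
      ≤ Module.finrank ℂ (lineSpan ℂ (schmidtCone I J (j + 1)) (vecMulVec x y)) :=
        hdim.trans_le (Submodule.finrank_mono (range_tangentMap_le_lineSpan_schmidtCone hx hy))
    _ = Module.finrank ℂ ((lineSpan ℂ (schmidtCone I J (j + 1)) (vecMulVec x y)).map Θ) :=
        (Submodule.equivMapOfInjective Θ hinj _).finrank_eq
    _ ≤ Module.finrank ℂ (lineSpan ℂ (schmidtCone I J (j + 1)) (vecMulVec v w)) :=
        hvw ▸ Submodule.finrank_mono (map_lineSpan_le Θ hΘ _)

theorem mapsTo_schmidtCone_of_le {k : ℕ} (hI : k < Fintype.card I) (hJ : k < Fintype.card J)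
    {Θ : Matrix (I × J) (I × J) ℂ →ₗ[ℂ] Matrix (I × J) (I × J) ℂ} (hinj : Function.Injective Θ)
    (hΘ : Set.MapsTo Θ (schmidtCone I J k) (schmidtCone I J k)) {j : ℕ} (hj : j ≤ k) :
    Set.MapsTo Θ (schmidtCone I J j) (schmidtCone I J j) := by
  induction hj using Nat.decreasingInduction with
  | self => exact hΘ
  | of_succ i hi ih => exact mapsTo_schmidtCone_of_succ (by omega) (by omega) hinj ih

end Descent

section Proportional

variable {K E W A : Type*} [Field K] [AddCommGroup E] [Module K E] [AddCommGroup W] [Module K W]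

/-- Equality up to a nonzero scalar: nonzero vectors are proportional when they define the same
point of projective space. -/
def Proportional (K : Type*) {E : Type*} [Field K] [AddCommGroup E] [Module K E] (u v : E) : Prop :=
  MulAction.orbitRel Kˣ E u v

namespace Proportional

theorem refl (u : E) : Proportional K u u := Setoid.refl' _ u

theorem symm {u v : E} (h : Proportional K u v) : Proportional K v u := Setoid.symm' _ h

theorem trans {u v w : E} (h : Proportional K u v) (h' : Proportional K v w) :
    Proportional K u w := Setoid.trans' _ h h'

theorem map (f : E →ₗ[K] W) {u v : E} (h : Proportional K u v) : Proportional K (f u) (f v) := by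
  obtain ⟨c, rfl⟩ := h
  exact ⟨c, (map_smul f (c : K) v).symm⟩

end Proportional

theorem proportional_iff_mul_eq_mul {u v : A → K} (hu : u ≠ 0) (hv : v ≠ 0) :
    Proportional K u v ↔ ∀ x y, u x * v y = u y * v x := by
  constructor
  · rintro ⟨c, rfl⟩ x y
    simp only [Pi.smul_apply, Units.smul_def, smul_eq_mul]
    ring
  · intro h
    obtain ⟨z, hz⟩ := Function.ne_iff.1 hv
    rw [Pi.zero_apply] at hz
    have huz : u z ≠ 0 := fun huz => hu <| funext fun x => by simpa [huz, hz] using h x z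
    refine ⟨Units.mk0 (u z / v z) (div_ne_zero huz hz), funext fun x => ?_⟩
    simp only [Units.smul_mk0, Pi.smul_apply, smul_eq_mul]
    field_simp
    rw [h z x, mul_comm]

theorem exists_ne_zero_not_proportional [Nontrivial A] {u : A → K} (hu : u ≠ 0) :
    ∃ c : A → K, c ≠ 0 ∧ ¬Proportional K u c := by
  classical
  obtain ⟨z, hz⟩ := Function.ne_iff.1 hu
  obtain ⟨y, hy⟩ := exists_ne z
  have hsingle : (Pi.single y 1 : A → K) ≠ 0 := by simp
  refine ⟨Pi.single y 1, hsingle, fun h => hz ?_⟩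
  simpa [hy.symm] using (proportional_iff_mul_eq_mul hu hsingle).1 h z y

theorem eq_of_forall_exists_smul {f g : E →ₗ[K] W} (hg : Function.Injective g)
    (h : ∀ v, ∃ c : K, f v = c • g v) {v₀ : E} (hv₀ : v₀ ≠ 0) (h₀ : f v₀ = g v₀) : f = g := by
  obtain ⟨p, hp⟩ := g.exists_leftInverse_of_injective (LinearMap.ker_eq_bot.2 hg)
  have hpg (v : E) : p (g v) = v := LinearMap.congr_fun hp v
  obtain ⟨a, ha⟩ : ∃ a : K, p ∘ₗ f = a • 1 := by
    refine LinearMap.exists_eq_smul_id_of_forall_notLinearIndependent fun v => ?_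
    obtain ⟨c, hc⟩ := h v
    rw [LinearIndependent.pair_iff]
    push Not
    exact ⟨-c, 1, by simp [hc, hpg], by simp⟩
  have hf (v : E) : f v = a • g v := by
    obtain ⟨c, hc⟩ := h v
    have hcv : c • v = a • v := by simpa [hc, hpg] using LinearMap.congr_fun ha v
    rw [hc, ← map_smul, hcv, map_smul]
  have hav₀ : a • v₀ = (1 : K) • v₀ := hg (by rw [map_smul, ← hf, h₀, one_smul])
  ext v
  rw [hf, smul_left_injective K hv₀ hav₀, one_smul]

end Proportional

section Multilinear

open Function

variable {K N W : Type*} {E : N → Type*}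

theorem update_induction [Finite N] [DecidableEq N] {p : (∀ i, E i) → Prop} {a b : ∀ i, E i}
    (ha : p a) (hstep : ∀ c l, p c → p (update c l (b l))) : p b := by
  cases nonempty_fintype N
  have hpiecewise (s : Finset N) : p (s.piecewise b a) := by
    induction s using Finset.induction_on with
    | empty => simpa using ha
    | insert i s _ ih => simpa only [Finset.piecewise_insert] using hstep _ i ih
  simpa using hpiecewise Finset.univ

theorem update_ne_zero [DecidableEq N] [∀ i, Zero (E i)] {a : ∀ i, E i} (ha : ∀ i, a i ≠ 0) {i : N}
    {c : E i} (hc : c ≠ 0) (l : N) : update a i c l ≠ 0 := by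
  rcases eq_or_ne l i with rfl | hl
  · rwa [update_self]
  · rw [update_of_ne hl]
    exact ha l

variable [Field K] [∀ i, AddCommGroup (E i)] [∀ i, Module K (E i)] [AddCommGroup W] [Module K W]
  {f g : MultilinearMap K E W}

theorem injective_toLinearMap_of_ne_zero [DecidableEq N] (hg : ∀ a, (∀ i, a i ≠ 0) → g a ≠ 0)
    {a : ∀ i, E i} (ha : ∀ i, a i ≠ 0) (i : N) : Injective (g.toLinearMap a i) :=
  (injective_iff_map_eq_zero _).2 fun _ hd => by_contra fun hd0 =>
    hg _ (update_ne_zero ha hd0) hd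

theorem multilinearMap_eq_of_forall_exists_smul [Finite N] (hg : ∀ a, (∀ i, a i ≠ 0) → g a ≠ 0)
    (h : ∀ a, (∀ i, a i ≠ 0) → ∃ c : K, f a = c • g a) {a₀ : ∀ i, E i} (ha₀ : ∀ i, a₀ i ≠ 0)
    (h₀ : f a₀ = g a₀) : f = g := by
  classical
  ext a
  by_cases ha : ∀ i, a i ≠ 0
  · refine (update_induction (p := fun c => (∀ i, c i ≠ 0) ∧ f c = g c) ⟨ha₀, h₀⟩ ?_).2
    rintro c l ⟨hc, hfg⟩
    refine ⟨update_ne_zero hc (ha l), LinearMap.congr_fun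
      (eq_of_forall_exists_smul (f := f.toLinearMap c l)
        (injective_toLinearMap_of_ne_zero hg hc l) ?_ (hc l) ?_) (a l)⟩
    · intro d
      rcases eq_or_ne d 0 with rfl | hd
      · exact ⟨0, by simp⟩
      · exact h _ (update_ne_zero hc hd)
    · simpa using hfg
  · push Not at ha
    obtain ⟨i, hi⟩ := ha
    rw [f.map_coord_zero i hi, g.map_coord_zero i hi]

end Multilinear

section PureTensor

open Function

variable {K N : Type*} {D : N → Type*} [Field K] [Fintype N]

/-- The elementary tensor `⨂ a i`, with `⨂ Kᴰⁱ` modelled as the functions on `∏ D i`. -/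
def pureTensor (K : Type*) {N : Type*} (D : N → Type*) [Field K] [Fintype N] :
    MultilinearMap K (fun i => D i → K) ((∀ i, D i) → K) :=
  MultilinearMap.pi fun x =>
    (MultilinearMap.mkPiAlgebra K N K).compLinearMap fun i => LinearMap.proj (x i)

theorem pureTensor_apply (a : ∀ i, D i → K) (x : ∀ i, D i) :
    pureTensor K D a x = ∏ i, a i (x i) := rfl

theorem pureTensor_ne_zero_iff {a : ∀ i, D i → K} : pureTensor K D a ≠ 0 ↔ ∀ i, a i ≠ 0 := by
  refine ⟨fun h i hi => h ((pureTensor K D).map_coord_zero i hi), fun ha => ?_⟩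
  choose x hx using fun i => ne_iff.1 (ha i)
  exact ne_iff.2 ⟨x, Finset.prod_ne_zero_iff.2 fun i _ => hx i⟩

theorem proportional_pureTensor {a b : ∀ i, D i → K} (h : ∀ i, Proportional K (a i) (b i)) :
    Proportional K (pureTensor K D a) (pureTensor K D b) := by
  choose c hc using h
  refine ⟨∏ i, c i, ?_⟩
  rw [← funext hc]
  simpa [Units.smul_def] using ((pureTensor K D).map_smul_univ (fun i => (c i : K)) b).symm

variable {a b d : ∀ i, D i → K}

theorem pureTensor_apply_update [DecidableEq N] (a : ∀ i, D i → K) (x : ∀ i, D i) (j : N)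
    (s : D j) :
    pureTensor K D a (update x j s) = a j s * pureTensor K D (update a j 1) x := by
  simp only [pureTensor_apply, ← Finset.mul_prod_erase _ _ (Finset.mem_univ j), update_self,
    Pi.one_apply, one_mul]
  congr 1
  refine Finset.prod_congr rfl fun l hl => ?_
  rw [update_of_ne (Finset.ne_of_mem_erase hl), update_of_ne (Finset.ne_of_mem_erase hl)]

theorem proportional_of_proportional_pureTensor (ha : ∀ i, a i ≠ 0) (hb : ∀ i, b i ≠ 0)
    (h : Proportional K (pureTensor K D a) (pureTensor K D b)) (j : N) :
    Proportional K (a j) (b j) := by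
  classical
  have ha' := pureTensor_ne_zero_iff.2 ha
  have hb' := pureTensor_ne_zero_iff.2 hb
  have hcross := (proportional_iff_mul_eq_mul ha' hb').1 h
  obtain ⟨x, hx⟩ := ne_iff.1 ha'
  obtain ⟨c, hc⟩ := h.symm
  have hxb : pureTensor K D b x ≠ 0 := by
    rw [← hc]
    exact mul_ne_zero c.ne_zero hx
  rw [← update_eq_self j x, pureTensor_apply_update] at hx hxb
  refine (proportional_iff_mul_eq_mul (ha j) (hb j)).2 fun s t => ?_
  have hst := hcross (update x j s) (update x j t)
  simp only [pureTensor_apply_update] at hst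
  refine mul_right_cancel₀ (mul_ne_zero (right_ne_zero_of_mul hx) (right_ne_zero_of_mul hxb)) ?_
  linear_combination hst

/-- Families of vectors that agree projectively in every slot other than `j`. -/
def ProportionalOff (K : Type*) {N : Type*} {D : N → Type*} [Field K] (j : N)
    (a b : ∀ i, D i → K) : Prop :=
  ∀ l ≠ j, Proportional K (a l) (b l)

theorem ProportionalOff.exists_pureTensor_eq [DecidableEq N] {j : N} (h : ProportionalOff K j a b) :
    ∃ u, pureTensor K D b = pureTensor K D (update a j u) := by
  have hprop (l : N) : Proportional K (b l) (update a j (b j) l) := by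
    rcases eq_or_ne l j with rfl | hl
    · rw [update_self]
      exact .refl _
    · rw [update_of_ne hl]
      exact (h l hl).symm
  obtain ⟨c, hc⟩ := proportional_pureTensor hprop
  exact ⟨(c : K) • b j, by rw [(pureTensor K D).map_update_smul]; exact hc.symm⟩

-- Unfolding the tensor `d` along the slot `j` gives a rank-one matrix, whose `2 × 2` minors are
-- products of a minor of the pair `a j, b j` and one of the remaining factors.
theorem exists_proportionalOff_of_pureTensor_add [Nonempty N] (ha : ∀ i, a i ≠ 0)
    (hb : ∀ i, b i ≠ 0) (h : pureTensor K D a + pureTensor K D b = pureTensor K D d) :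
    ∃ j, ProportionalOff K j a b := by
  classical
  by_cases hall : ∀ l, Proportional K (a l) (b l)
  · exact ⟨Classical.arbitrary N, fun l _ => hall l⟩
  push Not at hall
  obtain ⟨j, hj⟩ := hall
  rw [proportional_iff_mul_eq_mul (ha j) (hb j)] at hj
  push Not at hj
  obtain ⟨s, t, hst⟩ := hj
  have hone : (1 : D j → K) ≠ 0 := ne_iff.2 ⟨s, one_ne_zero⟩
  have ha' := update_ne_zero ha hone
  have hb' := update_ne_zero hb hone
  refine ⟨j, fun l hl => ?_⟩
  suffices hrest : Proportional K (pureTensor K D (update a j 1)) (pureTensor K D (update b j 1)) by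
    simpa only [update_of_ne hl] using proportional_of_proportional_pureTensor ha' hb' hrest l
  refine (proportional_iff_mul_eq_mul (pureTensor_ne_zero_iff.2 ha')
    (pureTensor_ne_zero_iff.2 hb')).2 fun x y => ?_
  have hslot (x : ∀ i, D i) (s : D j) : a j s * pureTensor K D (update a j 1) x +
      b j s * pureTensor K D (update b j 1) x = d j s * pureTensor K D (update d j 1) x := by
    simpa only [Pi.add_apply, pureTensor_apply_update] using congrFun h (update x j s)
  refine mul_left_cancel₀ (sub_ne_zero.2 hst) (sub_eq_zero.1 ?_)
  linear_combination congrArg₂ (· * ·) (hslot x s) (hslot y t) -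
    congrArg₂ (· * ·) (hslot x t) (hslot y s)

end PureTensor

section PureTensorPreserver

open Function

variable {K N : Type*} {D : N → Type*} [Field K] {F : (∀ i, D i → K) → ∀ i, D i → K}
  {a b : ∀ i, D i → K}

/-- Changing the vector `a i` changes, up to scalars, only the factor `j` of the image. -/
def MovesOnly [DecidableEq N] (F : (∀ i, D i → K) → ∀ i, D i → K) (a : ∀ i, D i → K) (i j : N) :
    Prop :=
  ∀ c ≠ 0, ProportionalOff K j (F a) (F (update a i c))

theorem MovesOnly.update_self [DecidableEq N] {i j : N} (hi : MovesOnly F a i j) {c : D i → K}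
    (hc : c ≠ 0) : MovesOnly F (update a i c) i j := by
  intro d hd l hl
  rw [update_idem]
  exact (hi c hc l hl).symm.trans (hi d hd l hl)

theorem proportional_of_movesOnly [Finite N] [DecidableEq N] {ρ : Equiv.Perm N}
    (hρ : ∀ a : ∀ i, D i → K, (∀ i, a i ≠ 0) → ∀ j, MovesOnly F a (ρ j) j) (ha : ∀ i, a i ≠ 0)
    (hb : ∀ i, b i ≠ 0) {j : N} (hab : a (ρ j) = b (ρ j)) : Proportional K (F a j) (F b j) := by
  refine (update_induction (p := fun c => (∀ i, c i ≠ 0) ∧ c (ρ j) = b (ρ j) ∧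
    Proportional K (F a j) (F c j)) ⟨ha, hab, .refl _⟩ fun c l hc => ?_).2.2
  obtain ⟨hc0, hcb, hFc⟩ := hc
  obtain ⟨p, rfl⟩ := ρ.surjective l
  rcases eq_or_ne p j with rfl | hpj
  · have hupdate : update c (ρ p) (b (ρ p)) = c := by rw [← hcb, update_eq_self]
    rw [hupdate]
    exact ⟨hc0, hcb, hFc⟩
  · refine ⟨update_ne_zero hc0 (hb _), ?_, hFc.trans (hρ c hc0 p (b (ρ p)) (hb _) j hpj.symm)⟩
    rw [update_of_ne (ρ.injective.ne hpj.symm), hcb]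

variable [Fintype N]

/-- The linear equivalence `Φ` and its inverse map elementary tensors to elementary tensors; the
map `F` chooses factors for the images. -/
structure PreservesPureTensors (Φ : ((∀ i, D i) → K) ≃ₗ[K] ((∀ i, D i) → K))
    (F : (∀ i, D i → K) → ∀ i, D i → K) : Prop where
  map_pureTensor : ∀ a, Φ (pureTensor K D a) = pureTensor K D (F a)
  symm_map_pureTensor : ∀ a, ∃ b, Φ.symm (pureTensor K D a) = pureTensor K D b

variable {Φ : ((∀ i, D i) → K) ≃ₗ[K] ((∀ i, D i) → K)}

namespace PreservesPureTensors

theorem ne_zero (h : PreservesPureTensors Φ F) (ha : ∀ i, a i ≠ 0) (j : N) : F a j ≠ 0 := by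
  refine pureTensor_ne_zero_iff.1 ?_ j
  rw [← h.map_pureTensor]
  exact Φ.map_ne_zero_iff.2 (pureTensor_ne_zero_iff.2 ha)

theorem proportional_of_forall_proportional (h : PreservesPureTensors Φ F) (ha : ∀ i, a i ≠ 0)
    (hb : ∀ i, b i ≠ 0) (hF : ∀ l, Proportional K (F a l) (F b l)) (i : N) :
    Proportional K (a i) (b i) := by
  refine proportional_of_proportional_pureTensor ha hb ?_ i
  simpa [← h.map_pureTensor] using (proportional_pureTensor hF).map Φ.symm.toLinearMap

section MovedFactor

variable [DecidableEq N] {i j l : N}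

theorem exists_proportionalOff [Nonempty N] (h : PreservesPureTensors Φ F) (ha : ∀ i, a i ≠ 0)
    {c : D i → K} (hc : c ≠ 0) : ∃ j, ProportionalOff K j (F a) (F (update a i c)) := by
  refine exists_proportionalOff_of_pureTensor_add (d := F (update a i (a i + c))) (h.ne_zero ha)
    (h.ne_zero (update_ne_zero ha hc)) ?_
  rw [← h.map_pureTensor, ← h.map_pureTensor, ← h.map_pureTensor, MultilinearMap.map_update_add,
    map_add, update_eq_self]

theorem not_proportional (h : PreservesPureTensors Φ F) (ha : ∀ i, a i ≠ 0) {c : D i → K}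
    (hc : c ≠ 0) (hac : ¬Proportional K (a i) c)
    (hj : ProportionalOff K j (F a) (F (update a i c))) :
    ¬Proportional K (F a j) (F (update a i c) j) := by
  intro hFj
  refine hac ?_
  have hF (l : N) : Proportional K (F a l) (F (update a i c) l) := by
    rcases eq_or_ne l j with rfl | hl
    · exact hFj
    · exact hj l hl
  simpa using h.proportional_of_forall_proportional ha (update_ne_zero ha hc) hF i

-- If `c₀` moved the factor `j` and `c` moved `l ≠ j`, passing from `c₀` to `c` would move both.
theorem exists_movesOnly [Nonempty N] [Nontrivial (D i)] (h : PreservesPureTensors Φ F)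
    (ha : ∀ i, a i ≠ 0) : ∃ j, MovesOnly F a i j := by
  obtain ⟨c₀, hc₀, hac₀⟩ := exists_ne_zero_not_proportional (ha i)
  obtain ⟨j, hj⟩ := h.exists_proportionalOff ha hc₀
  have hnj := h.not_proportional ha hc₀ hac₀ hj
  refine ⟨j, fun c hc l hl => by_contra fun hnl => ?_⟩
  obtain ⟨j₁, h₁⟩ := h.exists_proportionalOff ha hc
  obtain ⟨j₂, h₂⟩ := h.exists_proportionalOff (update_ne_zero ha hc₀) hc
  rw [update_idem] at h₂
  obtain rfl : l = j₁ := by_contra fun hne => hnl (h₁ l hne)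
  obtain rfl : j = j₂ := by_contra fun hne => hnj ((h₁ j hl.symm).trans (h₂ j hne).symm)
  exact hnl ((hj l hl).trans (h₂ l hl))

theorem eq_of_movesOnly [Nonempty N] [∀ i, Nontrivial (D i)] (h : PreservesPureTensors Φ F)
    (ha : ∀ i, a i ≠ 0) (hi : MovesOnly F a i j) (hl : MovesOnly F a l j) : i = l := by
  by_contra hil
  obtain ⟨c, hc, hac⟩ := exists_ne_zero_not_proportional (ha i)
  obtain ⟨d, hd, had⟩ := exists_ne_zero_not_proportional (ha l)
  obtain ⟨u, hu⟩ := ProportionalOff.exists_pureTensor_eq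
    fun p hp => (hi c hc p hp).symm.trans (hl d hd p hp)
  obtain ⟨e, he⟩ := h.symm_map_pureTensor
    (update (F (update a i c)) j (F (update a i c) j + u))
  rw [MultilinearMap.map_update_add, update_eq_self, ← hu, ← h.map_pureTensor,
    ← h.map_pureTensor, map_add, Φ.symm_apply_apply, Φ.symm_apply_apply] at he
  obtain ⟨p, hp⟩ := exists_proportionalOff_of_pureTensor_add (update_ne_zero ha hc)
    (update_ne_zero ha hd) he
  obtain rfl : i = p := by_contra fun hne => hac <| by
    simpa [update_of_ne hil] using (hp i hne).symm
  exact had <| by simpa [update_of_ne (Ne.symm hil)] using hp l (Ne.symm hil)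

theorem movesOnly_update [Nonempty N] [∀ i, Nontrivial (D i)] (h : PreservesPureTensors Φ F)
    (ha : ∀ i, a i ≠ 0) (hi : MovesOnly F a i j) {c : D l → K} (hc : c ≠ 0) :
    MovesOnly F (update a l c) i j := by
  rcases eq_or_ne l i with rfl | hli
  · exact hi.update_self hc
  have hac := update_ne_zero ha hc
  obtain ⟨j', hj'⟩ := h.exists_movesOnly (i := i) hac
  suffices hjj : j = j' by rwa [hjj]
  by_contra hjj
  obtain ⟨p, hp⟩ := h.exists_movesOnly (i := l) ha
  have hpj : j ≠ p := fun hjp => hli (h.eq_of_movesOnly ha (hjp ▸ hp) hi)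
  have hpj' : j' ≠ p := fun hjp =>
    hli (h.eq_of_movesOnly hac (hjp ▸ hp.update_self hc) hj')
  obtain ⟨d, hd, had⟩ := exists_ne_zero_not_proportional (ha i)
  have had' : ¬Proportional K (update a l c i) d := by rwa [update_of_ne hli.symm]
  obtain ⟨q, hq⟩ := h.exists_proportionalOff (update_ne_zero ha hd) (i := l) hc
  rw [update_comm hli.symm] at hq
  obtain rfl : j = q := by_contra fun hne => h.not_proportional ha hd had (hi d hd)
    ((hp c hc j hpj).trans ((hj' d hd j hjj).trans (hq j hne).symm))
  exact h.not_proportional hac hd had' (hj' d hd)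
    ((hp c hc j' hpj').symm.trans ((hi d hd j' (Ne.symm hjj)).trans (hq j' (Ne.symm hjj))))

theorem movesOnly_of_movesOnly [Nonempty N] [∀ i, Nontrivial (D i)]
    (h : PreservesPureTensors Φ F) (ha : ∀ i, a i ≠ 0) (hb : ∀ i, b i ≠ 0)
    (hi : MovesOnly F a i j) : MovesOnly F b i j :=
  (update_induction (p := fun c => (∀ i, c i ≠ 0) ∧ MovesOnly F c i j) ⟨ha, hi⟩
    fun _ l hc => ⟨update_ne_zero hc.1 (hb l), h.movesOnly_update hc.1 hc.2 (hb l)⟩).2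

theorem exists_perm_movesOnly [Nonempty N] [∀ i, Nontrivial (D i)]
    (h : PreservesPureTensors Φ F) :
    ∃ ρ : Equiv.Perm N, ∀ a : ∀ i, D i → K, (∀ i, a i ≠ 0) → ∀ j, MovesOnly F a (ρ j) j := by
  have hone (i : N) : (1 : D i → K) ≠ 0 := one_ne_zero
  choose σ hσ using fun i => h.exists_movesOnly (i := i) hone
  have hinj : Injective σ := fun i l hil =>
    h.eq_of_movesOnly hone (hσ i) (hil ▸ hσ l)
  let e := Equiv.ofBijective σ (Finite.injective_iff_bijective.1 hinj)
  refine ⟨e.symm, fun a ha j => h.movesOnly_of_movesOnly hone ha ?_⟩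
  simpa only [show σ (e.symm j) = j from e.apply_symm_apply j] using hσ (e.symm j)

theorem exists_factor (h : PreservesPureTensors Φ F) (ha : ∀ i, a i ≠ 0)
    (hij : MovesOnly F a i j) :
    ∃ f : (D i → K) →ₗ[K] (D j → K), Injective f ∧ f (a i) = F a j ∧
      ∀ c, Φ (pureTensor K D (update a i c)) = pureTensor K D (update (F a) j (f c)) := by
  have hinj {a : ∀ i, D i → K} (ha : ∀ i, a i ≠ 0) (i : N) :
      Injective ((pureTensor K D).toLinearMap a i) :=
    injective_toLinearMap_of_ne_zero (fun _ => pureTensor_ne_zero_iff.2) ha i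
  obtain ⟨p, hp⟩ := LinearMap.exists_leftInverse_of_injective _
    (LinearMap.ker_eq_bot.2 (hinj (h.ne_zero ha) j))
  have hp' (u) : p (pureTensor K D (update (F a) j u)) = u := LinearMap.congr_fun hp u
  let f := p ∘ₗ Φ.toLinearMap ∘ₗ (pureTensor K D).toLinearMap a i
  have hf (c) : Φ (pureTensor K D (update a i c)) = pureTensor K D (update (F a) j (f c)) := by
    obtain ⟨u, hu⟩ : ∃ u, Φ (pureTensor K D (update a i c)) =
        pureTensor K D (update (F a) j u) := by
      rcases eq_or_ne c 0 with rfl | hc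
      · exact ⟨0, by simp⟩
      · rw [h.map_pureTensor]
        exact (hij c hc).exists_pureTensor_eq
    have hfu : f c = u := by
      change p (Φ (pureTensor K D (update a i c))) = u
      rw [hu, hp']
    rw [hu, hfu]
  refine ⟨f, fun c d hcd => hinj ha i (Φ.injective ?_), ?_, hf⟩
  · change Φ (pureTensor K D (update a i c)) = Φ (pureTensor K D (update a i d))
    rw [hf, hf, hcd]
  · refine hinj (h.ne_zero ha) j ((hf (a i)).symm.trans ?_)
    rw [update_eq_self, h.map_pureTensor, MultilinearMap.toLinearMap_apply, update_eq_self]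

end MovedFactor

theorem exists_perm_factors [Nonempty N] [∀ i, Nontrivial (D i)]
    (h : PreservesPureTensors Φ F) :
    ∃ (ρ : Equiv.Perm N) (f : ∀ j, (D (ρ j) → K) →ₗ[K] (D j → K)),
      (∀ j, Injective (f j)) ∧
        ∀ a, Φ (pureTensor K D a) = pureTensor K D fun j => f j (a (ρ j)) := by
  classical
  obtain ⟨ρ, hρ⟩ := h.exists_perm_movesOnly
  have hone (i : N) : (1 : D i → K) ≠ 0 := one_ne_zero
  choose f hinj hf1 hf using fun j => h.exists_factor hone (hρ _ hone j)
  have hfne {a : ∀ i, D i → K} (ha : ∀ i, a i ≠ 0) (j : N) : f j (a (ρ j)) ≠ 0 :=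
    (map_ne_zero_iff _ (hinj j)).2 (ha _)
  have hfF {a : ∀ i, D i → K} (ha : ∀ i, a i ≠ 0) (j : N) :
      Proportional K (F a j) (f j (a (ρ j))) := by
    have hb := update_ne_zero hone (ha (ρ j))
    have hFb := (h.map_pureTensor _).symm.trans (hf j (a (ρ j)))
    have hbj := proportional_of_proportional_pureTensor (h.ne_zero hb)
      (update_ne_zero (h.ne_zero hone) (hfne ha j)) (hFb ▸ .refl _) j
    rw [update_self] at hbj
    exact (proportional_of_movesOnly hρ ha hb (by rw [update_self])).trans hbj
  let G : MultilinearMap K (fun i => D i → K) ((∀ i, D i) → K) :=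
    (MultilinearMap.domDomCongrLinearEquiv' K K _ _ ρ.symm).symm
      ((pureTensor K D).compLinearMap f)
  refine ⟨ρ, f, hinj, fun a => DFunLike.congr_fun (multilinearMap_eq_of_forall_exists_smul
    (f := Φ.toLinearMap.compMultilinearMap (pureTensor K D)) (g := G) ?_ ?_ hone ?_) a⟩
  · exact fun a ha => pureTensor_ne_zero_iff.2 (hfne ha)
  · intro a ha
    obtain ⟨c, hc⟩ := proportional_pureTensor (hfF ha)
    exact ⟨c, (h.map_pureTensor a).trans hc.symm⟩
  · exact (h.map_pureTensor _).trans (congrArg _ (funext fun j => (hf1 j).symm))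

end PreservesPureTensors

end PureTensorPreserver

section IsometricFactors

open Function
open WithLp (toLp)

variable {𝕜 N : Type*} {D : N → Type*} [RCLike 𝕜] [Fintype N]
  [∀ i, Fintype (D i)]

theorem norm_toLp_pureTensor [DecidableEq N] (a : ∀ i, D i → 𝕜) :
    ‖toLp 2 (pureTensor 𝕜 D a)‖ = ∏ i, ‖toLp 2 (a i)‖ := by
  simp only [EuclideanSpace.norm_eq, pureTensor_apply, norm_prod, ← Finset.prod_pow]
  rw [← Real.sqrt_prod _ fun i _ => Finset.sum_nonneg fun _ _ => sq_nonneg _,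
    Finset.prod_univ_sum, Fintype.piFinset_univ]

theorem norm_factor_eq {ρ : Equiv.Perm N} {f : ∀ j, (D (ρ j) → 𝕜) →ₗ[𝕜] (D j → 𝕜)}
    (hf : ∀ a : ∀ i, D i → 𝕜, ∏ j, ‖toLp 2 (f j (a (ρ j)))‖ = ∏ i, ‖toLp 2 (a i)‖)
    {e : ∀ i, D i → 𝕜} (he : ∀ i, ‖toLp 2 (e i)‖ = 1) (j : N) (c : D (ρ j) → 𝕜) :
    ‖toLp 2 (f j c)‖ = ‖toLp 2 (f j (e (ρ j)))‖ * ‖toLp 2 c‖ := by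
  classical
  have hrest : ∏ l ∈ Finset.univ.erase j, ‖toLp 2 (f l (update e (ρ j) c (ρ l)))‖ =
      ∏ l ∈ Finset.univ.erase j, ‖toLp 2 (f l (e (ρ l)))‖ :=
    Finset.prod_congr rfl fun l hl => by
      rw [update_of_ne (ρ.injective.ne (Finset.ne_of_mem_erase hl))]
  have hrest' : ∏ l ∈ Finset.univ.erase (ρ j), ‖toLp 2 (update e (ρ j) c l)‖ = 1 :=
    Finset.prod_eq_one fun l hl => by rw [update_of_ne (Finset.ne_of_mem_erase hl), he]
  have hc := hf (update e (ρ j) c)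
  have he1 := hf e
  rw [← Finset.mul_prod_erase _ _ (Finset.mem_univ j), hrest,
    ← Finset.mul_prod_erase _ _ (Finset.mem_univ (ρ j)), hrest', update_self, mul_one] at hc
  rw [← Finset.mul_prod_erase _ _ (Finset.mem_univ j), Finset.prod_eq_one fun i _ => he i] at he1
  rw [← hc]
  linear_combination -‖toLp 2 (f j c)‖ * he1

namespace PreservesPureTensors

theorem exists_perm_isometric_factors [DecidableEq N] [Nonempty N] [∀ i, Nontrivial (D i)]
    {Φ : ((∀ i, D i) → 𝕜) ≃ₗ[𝕜] ((∀ i, D i) → 𝕜)} {F : (∀ i, D i → 𝕜) → ∀ i, D i → 𝕜}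
    (h : PreservesPureTensors Φ F)
    (hnorm : ∀ a, ‖toLp 2 (Φ (pureTensor 𝕜 D a))‖ = ‖toLp 2 (pureTensor 𝕜 D a)‖) :
    ∃ (ρ : Equiv.Perm N) (f : ∀ j, (D (ρ j) → 𝕜) →ₗ[𝕜] (D j → 𝕜)),
      (∀ j c, ‖toLp 2 (f j c)‖ = ‖toLp 2 c‖) ∧
        ∀ a, Φ (pureTensor 𝕜 D a) = pureTensor 𝕜 D fun j => f j (a (ρ j)) := by
  classical
  obtain ⟨ρ, f, hinj, hf⟩ := h.exists_perm_factors
  have hprod (a : ∀ i, D i → 𝕜) :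
      ∏ j, ‖toLp 2 (f j (a (ρ j)))‖ = ∏ i, ‖toLp 2 (a i)‖ := by
    rw [← norm_toLp_pureTensor, ← norm_toLp_pureTensor, ← hf, hnorm]
  let e (i : N) : D i → 𝕜 := Pi.single (Classical.arbitrary _) 1
  have he (i : N) : ‖toLp 2 (e i)‖ = 1 := by
    rw [PiLp.toLp_single, PiLp.norm_single, norm_one]
  let s (j : N) : ℝ := ‖toLp 2 (f j (e (ρ j)))‖
  have hs (j : N) : s j ≠ 0 := by
    simp only [s, ne_eq, norm_eq_zero, WithLp.toLp_eq_zero, map_eq_zero_iff _ (hinj j)]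
    simp [e]
  have hs1 : ∏ j, s j = 1 := (hprod e).trans (Finset.prod_eq_one fun i _ => he i)
  refine ⟨ρ, fun j => ((s j : 𝕜)⁻¹) • f j, fun j c => ?_, fun a => ?_⟩
  · rw [LinearMap.smul_apply, WithLp.toLp_smul, norm_smul, norm_factor_eq hprod he, norm_inv,
      RCLike.norm_ofReal, abs_of_nonneg (norm_nonneg _), inv_mul_cancel_left₀ (hs j)]
  · simp only [LinearMap.smul_apply, MultilinearMap.map_smul_univ, Finset.prod_inv_distrib]
    rw [← RCLike.ofReal_prod, hs1, RCLike.ofReal_one, inv_one, one_smul, hf]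

end PreservesPureTensors

end IsometricFactors

section LocalUnitary

variable {m n : ℕ}

theorem swapMat_eq_permMatrix (m : ℕ) :
    swapMat m m = Equiv.Perm.permMatrix ℂ (Equiv.prodComm (Fin m) (Fin m)) := by
  ext p q
  simp [swapMat, Equiv.toPEquiv_apply, Prod.ext_iff, Fin.ext_iff, and_comm]

theorem swapMat_transpose (m : ℕ) : (swapMat m m)ᵀ = swapMat m m := by
  rw [swapMat_eq_permMatrix, transpose_permMatrix]
  rfl

theorem swapMat_conjTranspose (m : ℕ) : (swapMat m m)ᴴ = swapMat m m := by
  rw [swapMat_eq_permMatrix, conjTranspose_permMatrix]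
  rfl

theorem swapMat_mul (X : Matrix (Fin m × Fin m) (Fin m × Fin m) ℂ) :
    swapMat m m * X = X.submatrix Prod.swap id := by
  rw [swapMat_eq_permMatrix, PEquiv.toMatrix_toPEquiv_mul]
  rfl

theorem mul_swapMat (X : Matrix (Fin m × Fin m) (Fin m × Fin m) ℂ) :
    X * swapMat m m = X.submatrix id Prod.swap := by
  rw [swapMat_eq_permMatrix, PEquiv.mul_toMatrix_toPEquiv]
  rfl

theorem swapMat_mem_unitaryGroup (m : ℕ) : swapMat m m ∈ unitaryGroup (Fin m × Fin m) ℂ := by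
  rw [mem_unitaryGroup_iff, star_eq_conjTranspose, swapMat_conjTranspose, swapMat_eq_permMatrix,
    ← permMatrix_mul, ← permMatrix_one]
  rfl

theorem kronecker_mul_swapMat (A B : Matrix (Fin m) (Fin m) ℂ) :
    (A ⊗ₖ B) * swapMat m m = swapMat m m * (B ⊗ₖ A) := by
  rw [mul_swapMat, swapMat_mul]
  ext p q
  exact mul_comm _ _

theorem kronecker_mulVec_prodVec {I I' J J' : Type*} [Fintype I] [Fintype J] (A : Matrix I' I ℂ)
    (B : Matrix J' J ℂ) (a : I → ℂ) (b : J → ℂ) :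
    (A ⊗ₖ B) *ᵥ prodVec a b = prodVec (A *ᵥ a) (B *ᵥ b) := by
  ext p
  simp only [mulVec, dotProduct, prodVec, kroneckerMap_apply, Fintype.sum_prod_type,
    Finset.sum_mul_sum]
  exact Finset.sum_congr rfl fun i _ => Finset.sum_congr rfl fun j _ => by ring

theorem swapMat_mulVec_prodVec (a b : Fin m → ℂ) :
    swapMat m m *ᵥ prodVec a b = prodVec b a := by
  rw [swapMat_eq_permMatrix, permMatrix_mulVec]
  ext p
  exact mul_comm _ _

theorem isLocalUnitary_one (m n : ℕ) : IsLocalUnitary m n 1 :=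
  Or.inl ⟨1, one_mem _, 1, one_mem _, one_kronecker_one.symm⟩

theorem isLocalUnitary_swapMat (m : ℕ) : IsLocalUnitary m m (swapMat m m) :=
  Or.inr ⟨rfl, 1, one_mem _, 1, one_mem _, by rw [one_kronecker_one, mul_one]⟩

namespace IsLocalUnitary

variable {U : Matrix (Fin m × Fin n) (Fin m × Fin n) ℂ}

theorem conjTranspose (h : IsLocalUnitary m n U) : IsLocalUnitary m n Uᴴ := by
  rcases h with ⟨A, hA, B, hB, rfl⟩ | ⟨rfl, A, hA, B, hB, rfl⟩
  · exact Or.inl ⟨Aᴴ, Unitary.star_mem hA, Bᴴ, Unitary.star_mem hB, conjTranspose_kronecker A B⟩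
  · refine Or.inr ⟨rfl, Bᴴ, Unitary.star_mem hB, Aᴴ, Unitary.star_mem hA, ?_⟩
    rw [conjTranspose_mul, conjTranspose_kronecker, swapMat_conjTranspose, kronecker_mul_swapMat]

theorem transpose (h : IsLocalUnitary m n U) : IsLocalUnitary m n Uᵀ := by
  rcases h with ⟨A, hA, B, hB, rfl⟩ | ⟨rfl, A, hA, B, hB, rfl⟩
  · exact Or.inl ⟨Aᵀ, transpose_mem_unitaryGroup_iff.2 hA, Bᵀ,
      transpose_mem_unitaryGroup_iff.2 hB, (kroneckerMap_transpose _ A B).symm⟩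
  · refine Or.inr ⟨rfl, Bᵀ, transpose_mem_unitaryGroup_iff.2 hB, Aᵀ,
      transpose_mem_unitaryGroup_iff.2 hA, ?_⟩
    rw [transpose_mul, ← kroneckerMap_transpose, swapMat_transpose, kronecker_mul_swapMat]

theorem mem_unitaryGroup (h : IsLocalUnitary m n U) : U ∈ unitaryGroup (Fin m × Fin n) ℂ := by
  rcases h with ⟨A, hA, B, hB, rfl⟩ | ⟨rfl, A, hA, B, hB, rfl⟩
  · exact kronecker_mem_unitary hA hB
  · exact mul_mem (swapMat_mem_unitaryGroup m) (kronecker_mem_unitary hA hB)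

theorem schmidtRankLE_mulVec (h : IsLocalUnitary m n U) {k : ℕ} {v : Fin m × Fin n → ℂ}
    (hv : SchmidtRankLE k v) : SchmidtRankLE k (U *ᵥ v) := by
  obtain ⟨a, b, rfl⟩ := hv
  rcases h with ⟨A, -, B, -, rfl⟩ | ⟨rfl, A, -, B, -, rfl⟩
  · refine ⟨fun i => A *ᵥ a i, fun i => B *ᵥ b i, ?_⟩
    simp only [mulVec_sum, kronecker_mulVec_prodVec]
  · refine ⟨fun i => B *ᵥ b i, fun i => A *ᵥ a i, ?_⟩
    simp only [mulVec_sum, ← mulVec_mulVec, kronecker_mulVec_prodVec, swapMat_mulVec_prodVec]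

end IsLocalUnitary

end LocalUnitary

section Generators

open scoped Matrix.Norms.Frobenius

attribute [local instance] hilbertSchmidt

variable {m n k : ℕ}

theorem frobenius_norm_unitary_mul {𝕜 A B : Type*} [RCLike 𝕜] [Fintype A] [DecidableEq A]
    [Fintype B] {U : Matrix A A 𝕜} (hU : U ∈ unitaryGroup A 𝕜) (X : Matrix A B 𝕜) :
    ‖U * X‖ = ‖X‖ := by
  have hinner : inner 𝕜 (U * X) (U * X) = inner 𝕜 X X := by
    change ((U * X)ᴴ * (U * X)).trace = (Xᴴ * X).trace
    rw [conjTranspose_mul, Matrix.mul_assoc, ← Matrix.mul_assoc Uᴴ, ← star_eq_conjTranspose U,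
      mem_unitaryGroup_iff'.1 hU, Matrix.one_mul]
  rw [norm_eq_sqrt_re_inner (𝕜 := 𝕜), hinner, ← norm_eq_sqrt_re_inner]

theorem frobenius_norm_mul_unitary {𝕜 A B : Type*} [RCLike 𝕜] [Fintype A] [Fintype B]
    [DecidableEq B] {V : Matrix B B 𝕜} (hV : V ∈ unitaryGroup B 𝕜) (X : Matrix A B 𝕜) :
    ‖X * V‖ = ‖X‖ := by
  rw [← frobenius_norm_transpose, transpose_mul,
    frobenius_norm_unitary_mul (transpose_mem_unitaryGroup_iff.2 hV), frobenius_norm_transpose]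

theorem frobenius_norm_ptrans (X : Matrix (Fin m × Fin n) (Fin m × Fin n) ℂ) :
    ‖ptrans X‖ = ‖X‖ := by
  rw [frobenius_norm_def, frobenius_norm_def]
  congr 1
  simp only [ptrans, Fintype.sum_prod_type]
  refine Finset.sum_congr rfl fun i _ => ?_
  rw [Finset.sum_comm, Finset.sum_comm (γ := Fin n)]
  refine Finset.sum_congr rfl fun j _ => Finset.sum_comm

/-- The isometry `X ↦ U * X * V` of the Hilbert–Schmidt space, for unitary `U` and `V`. -/
noncomputable def unitarySandwich {A : Type*} [Fintype A] [DecidableEq A]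
    (U V : unitaryGroup A ℂ) : Matrix A A ℂ ≃ₗᵢ[ℂ] Matrix A A ℂ where
  toFun X := U * X * V
  invFun X := star (U : Matrix A A ℂ) * X * star (V : Matrix A A ℂ)
  map_add' X Y := by rw [mul_add, add_mul]
  map_smul' c X := by rw [RingHom.id_apply, mul_smul_comm, smul_mul_assoc]
  left_inv X := by
    change star (U : Matrix A A ℂ) * (U * X * V) * star (V : Matrix A A ℂ) = X
    rw [mul_assoc, mul_assoc, mul_assoc, mem_unitaryGroup_iff.1 V.2, mul_one, ← mul_assoc,
      mem_unitaryGroup_iff'.1 U.2, one_mul]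
  right_inv X := by
    change U * (star (U : Matrix A A ℂ) * X * star (V : Matrix A A ℂ)) * V = X
    rw [mul_assoc, mul_assoc, mul_assoc, mem_unitaryGroup_iff'.1 V.2, mul_one, ← mul_assoc,
      mem_unitaryGroup_iff.1 U.2, one_mul]
  norm_map' X := (frobenius_norm_mul_unitary V.2 _).trans (frobenius_norm_unitary_mul U.2 X)

/-- `ptrans` as an isometry of the Hilbert–Schmidt space. -/
noncomputable def ptransIsometry (m n : ℕ) :
    Matrix (Fin m × Fin n) (Fin m × Fin n) ℂ ≃ₗᵢ[ℂ] Matrix (Fin m × Fin n) (Fin m × Fin n) ℂ where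
  toFun := ptrans
  invFun := ptrans
  map_add' _ _ := rfl
  map_smul' _ _ := rfl
  left_inv _ := rfl
  right_inv _ := rfl
  norm_map' := frobenius_norm_ptrans

variable {f : Matrix (Fin m × Fin n) (Fin m × Fin n) ℂ → Matrix (Fin m × Fin n) (Fin m × Fin n) ℂ}

theorem IsIsoGen.exists_linearIsometryEquiv (hf : IsIsoGen m n k f) :
    ∃ F : Matrix (Fin m × Fin n) (Fin m × Fin n) ℂ ≃ₗᵢ[ℂ]
      Matrix (Fin m × Fin n) (Fin m × Fin n) ℂ, ⇑F = f ∧ IsIsoGen m n k F.symm := by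
  cases hf with
  | unitary U V hU hV =>
    exact ⟨unitarySandwich ⟨U, hU.mem_unitaryGroup⟩ ⟨V, hV.mem_unitaryGroup⟩, rfl,
      .unitary _ _ hU.conjTranspose hV.conjTranspose⟩
  | transpose =>
    exact ⟨⟨transposeLinearEquiv _ _ ℂ ℂ, frobenius_norm_transpose⟩, rfl, .transpose⟩
  | ptranspose hk => exact ⟨ptransIsometry m n, rfl, .ptranspose hk⟩

theorem IsIsoComp.exists_linearIsometryEquiv (hf : IsIsoComp m n k f) :
    ∃ F : Matrix (Fin m × Fin n) (Fin m × Fin n) ℂ ≃ₗᵢ[ℂ]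
      Matrix (Fin m × Fin n) (Fin m × Fin n) ℂ, ⇑F = f ∧ IsIsoComp m n k F.symm := by
  induction hf with
  | base f hf =>
    obtain ⟨F, rfl, hF⟩ := hf.exists_linearIsometryEquiv
    exact ⟨F, rfl, .base _ hF⟩
  | comp f g _ _ ihf ihg =>
    obtain ⟨F, rfl, hF⟩ := ihf
    obtain ⟨G, rfl, hG⟩ := ihg
    exact ⟨G.trans F, rfl, .comp G.symm F.symm hG hF⟩

theorem ptrans_vecMulVec_prodVec (a c : Fin m → ℂ) (b d : Fin n → ℂ) :
    ptrans (vecMulVec (prodVec a b) (prodVec c d)) =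
      vecMulVec (prodVec a d) (prodVec c b) := by
  ext p q
  simp only [ptrans, vecMulVec_apply, prodVec]
  ring

theorem IsIsoGen.mapsTo_schmidtCone (hf : IsIsoGen m n k f) :
    Set.MapsTo f (schmidtCone (Fin m) (Fin n) k) (schmidtCone (Fin m) (Fin n) k) := by
  rintro _ ⟨v, hv, w, hw, rfl⟩
  cases hf with
  | unitary U V hU hV =>
    refine ⟨U *ᵥ v, hU.schmidtRankLE_mulVec hv, Vᵀ *ᵥ w, hV.transpose.schmidtRankLE_mulVec hw, ?_⟩
    beta_reduce
    rw [mul_vecMulVec, vecMulVec_mul, mulVec_transpose]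
  | transpose => exact ⟨w, hw, v, hv, (transpose_vecMulVec v w).symm⟩
  | ptranspose hk =>
    subst hk
    obtain ⟨a, b, rfl⟩ := schmidtRankLE_one_iff.1 hv
    obtain ⟨c, d, rfl⟩ := schmidtRankLE_one_iff.1 hw
    exact ⟨_, schmidtRankLE_prodVec a d, _, schmidtRankLE_prodVec c b,
      (ptrans_vecMulVec_prodVec a c b d).symm⟩

theorem IsIsoComp.mapsTo_schmidtCone (hf : IsIsoComp m n k f) :
    Set.MapsTo f (schmidtCone (Fin m) (Fin n) k) (schmidtCone (Fin m) (Fin n) k) := by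
  induction hf with
  | base f hf => exact hf.mapsTo_schmidtCone
  | comp f g _ _ ihf ihg => exact ihf.comp ihg

theorem image_schmidtAtoms_eq_of_isIsoComp
    {F : Matrix (Fin m × Fin n) (Fin m × Fin n) ℂ ≃ₗᵢ[ℂ] Matrix (Fin m × Fin n) (Fin m × Fin n) ℂ}
    (hF : IsIsoComp m n k F) (hF' : IsIsoComp m n k F.symm) :
    F '' schmidtAtoms (Fin m) (Fin n) k = schmidtAtoms (Fin m) (Fin n) k := by
  refine Set.Subset.antisymm (Set.image_subset_iff.2 fun X hX => ?_) fun X hX =>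
    ⟨F.symm X, ?_, F.apply_symm_apply X⟩
  · rw [mem_schmidtAtoms_iff] at hX
    exact mem_schmidtAtoms_iff.2 ⟨hF.mapsTo_schmidtCone hX.1, (F.norm_map X).trans hX.2⟩
  · rw [mem_schmidtAtoms_iff] at hX ⊢
    exact ⟨hF'.mapsTo_schmidtCone hX.1, (F.symm.norm_map X).trans hX.2⟩

end Generators

section FourSlots

open scoped Matrix.Norms.Frobenius
open WithLp (toLp)

variable {D : Fin 4 → Type*}

/-- A choice of one index in each of four slots, read as a row index followed by a column index. -/
def slotEquiv (D : Fin 4 → Type*) : (∀ i, D i) ≃ (D 0 × D 1) × (D 2 × D 3) where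
  toFun x := ((x 0, x 1), (x 2, x 3))
  invFun p := Fin.cons p.1.1 (Fin.cons p.1.2 (Fin.cons p.2.1 (Fin.cons p.2.2 fun i => i.elim0)))
  left_inv x := by
    funext i
    fin_cases i <;> rfl
  right_inv _ := rfl

/-- The four-slot tensors as matrices: slots `0`, `1` index the rows, slots `2`, `3` the columns. -/
noncomputable def tensorToMatrix (D : Fin 4 → Type*) :
    ((∀ i, D i) → ℂ) ≃ₗ[ℂ] Matrix (D 0 × D 1) (D 2 × D 3) ℂ :=
  LinearEquiv.funCongrLeft ℂ ℂ (slotEquiv D).symm ≪≫ₗ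
    LinearEquiv.curry ℂ ℂ _ _ ≪≫ₗ Matrix.ofLinearEquiv ℂ

theorem tensorToMatrix_pureTensor (a : ∀ i, D i → ℂ) :
    tensorToMatrix D (pureTensor ℂ D a) =
      vecMulVec (prodVec (a 0) (a 1)) (prodVec (a 2) (a 3)) := by
  ext p q
  change ∏ i, a i ((slotEquiv D).symm (p, q) i) = a 0 p.1 * a 1 p.2 * (a 2 q.1 * a 3 q.2)
  rw [Fin.prod_univ_four, mul_assoc (_ * _)]
  rfl

theorem norm_tensorToMatrix [∀ i, Fintype (D i)] (u : (∀ i, D i) → ℂ) :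
    ‖tensorToMatrix D u‖ = ‖toLp 2 u‖ := by
  rw [frobenius_norm_def, EuclideanSpace.norm_eq, Real.sqrt_eq_rpow, ← Fintype.sum_prod_type',
    ← (slotEquiv D).symm.sum_comp]
  simp only [Real.rpow_ofNat]
  rfl

theorem linearMap_ext_of_pureTensor [∀ i, Finite (D i)] {W : Type*} [AddCommGroup W] [Module ℂ W]
    {F G : Matrix (D 0 × D 1) (D 2 × D 3) ℂ →ₗ[ℂ] W}
    (h : ∀ a, F (tensorToMatrix D (pureTensor ℂ D a)) = G (tensorToMatrix D (pureTensor ℂ D a))) :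
    F = G := by
  classical
  refine LinearMap.cancel_right (tensorToMatrix D).surjective |>.1 (LinearMap.pi_ext' fun x => ?_)
  ext
  have hsingle : Pi.single x (1 : ℂ) = pureTensor ℂ D fun i => Pi.single (x i) 1 := by
    ext y
    simp [pureTensor_apply, Pi.single_apply, Finset.prod_ite_zero, funext_iff]
  simpa [hsingle] using h fun i => Pi.single (x i) 1

variable {m n : ℕ}

/-- The dimensions of the four slots of a matrix over `Fin m × Fin n`. -/
abbrev slotDim (m n : ℕ) : Fin 4 → ℕ := ![m, n, m, n]

/-- `tensorToMatrix` for the slots of a matrix over `Fin m × Fin n`. -/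
noncomputable abbrev slotMatrix (m n : ℕ) : ((∀ i, Fin (slotDim m n i)) → ℂ) ≃ₗ[ℂ]
    Matrix (Fin m × Fin n) (Fin m × Fin n) ℂ :=
  tensorToMatrix fun i => Fin (slotDim m n i)

theorem mem_schmidtCone_one_iff {X : Matrix (Fin m × Fin n) (Fin m × Fin n) ℂ} :
    X ∈ schmidtCone (Fin m) (Fin n) 1 ↔ ∃ a, X = slotMatrix m n (pureTensor ℂ _ a) := by
  constructor
  · rintro ⟨v, hv, w, hw, rfl⟩
    obtain ⟨a, b, rfl⟩ := schmidtRankLE_one_iff.1 hv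
    obtain ⟨c, d, rfl⟩ := schmidtRankLE_one_iff.1 hw
    let t : ∀ i, Fin (slotDim m n i) → ℂ :=
      Fin.cons a (Fin.cons b (Fin.cons c (Fin.cons d fun i => i.elim0)))
    exact ⟨t, (tensorToMatrix_pureTensor t).symm⟩
  · rintro ⟨a, rfl⟩
    exact ⟨_, schmidtRankLE_prodVec (a 0) (a 1), _, schmidtRankLE_prodVec (a 2) (a 3),
      (tensorToMatrix_pureTensor a).symm⟩

theorem exists_perm_isometric_factors_of_mapsTo [Nontrivial (Fin m)] [Nontrivial (Fin n)]
    {Θ : Matrix (Fin m × Fin n) (Fin m × Fin n) ℂ ≃ₗ[ℂ] Matrix (Fin m × Fin n) (Fin m × Fin n) ℂ}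
    (hΘ : Set.MapsTo Θ (schmidtCone (Fin m) (Fin n) 1) (schmidtCone (Fin m) (Fin n) 1))
    (hΘ' : Set.MapsTo Θ.symm (schmidtCone (Fin m) (Fin n) 1) (schmidtCone (Fin m) (Fin n) 1))
    (hnorm : ∀ X ∈ schmidtCone (Fin m) (Fin n) 1, ‖Θ X‖ = ‖X‖) :
    ∃ (ρ : Equiv.Perm (Fin 4))
      (f : ∀ j, (Fin (slotDim m n (ρ j)) → ℂ) →ₗ[ℂ] (Fin (slotDim m n j) → ℂ)),
      (∀ j c, ‖toLp 2 (f j c)‖ = ‖toLp 2 c‖) ∧ ∀ a, Θ (slotMatrix m n (pureTensor ℂ _ a)) =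
        slotMatrix m n (pureTensor ℂ _ fun j => f j (a (ρ j))) := by
  have : ∀ i, Nontrivial (Fin (slotDim m n i)) := by
    simpa only [Fin.forall_fin_succ] using ⟨‹_›, ‹_›, ‹_›, ‹_›, fun i => i.elim0⟩
  choose F hF using fun a => mem_schmidtCone_one_iff.1 (hΘ (mem_schmidtCone_one_iff.2 ⟨a, rfl⟩))
  choose G hG using fun a => mem_schmidtCone_one_iff.1 (hΘ' (mem_schmidtCone_one_iff.2 ⟨a, rfl⟩))
  let L := slotMatrix m n
  have hpure : PreservesPureTensors (L ≪≫ₗ Θ ≪≫ₗ L.symm) F :=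
    { map_pureTensor := fun a => L.symm_apply_eq.2 (hF a)
      symm_map_pureTensor := fun a => ⟨G a, L.symm_apply_eq.2 (hG a)⟩ }
  obtain ⟨ρ, f, hf, hρ⟩ := hpure.exists_perm_isometric_factors fun a =>
    calc ‖toLp 2 (L.symm (Θ (L (pureTensor ℂ _ a))))‖
      _ = ‖L (L.symm (Θ (L (pureTensor ℂ _ a))))‖ := (norm_tensorToMatrix _).symm
      _ = ‖L (pureTensor ℂ _ a)‖ := by
        rw [L.apply_symm_apply]
        exact hnorm _ (mem_schmidtCone_one_iff.2 ⟨a, rfl⟩)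
      _ = ‖toLp 2 (pureTensor ℂ _ a)‖ := norm_tensorToMatrix _
  exact ⟨ρ, f, hf, fun a => L.symm_apply_eq.1 (hρ a)⟩

end FourSlots

section SlotPairs

open WithLp (toLp)

theorem toMatrix'_mem_unitaryGroup {A : Type*} [Fintype A] [DecidableEq A]
    {f : (A → ℂ) →ₗ[ℂ] (A → ℂ)} (hf : ∀ c, ‖toLp 2 (f c)‖ = ‖toLp 2 c‖) :
    LinearMap.toMatrix' f ∈ unitaryGroup A ℂ := by
  let L := (WithLp.linearEquiv 2 ℂ (A → ℂ)).symm
  have hinner (x y : A → ℂ) : vinner (f x) (f y) = vinner x y := by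
    rw [vinner_eq_inner, vinner_eq_inner]
    exact (LinearMap.norm_map_iff_inner_map_map (L.conj f)).1 (fun x => hf x.ofLp) (L x) (L y)
  rw [mem_unitaryGroup_iff']
  ext i j
  refine Eq.trans ?_ ((hinner (Pi.single i 1) (Pi.single j 1)).trans ?_)
  · simp only [mul_apply, star_apply, LinearMap.toMatrix'_apply]
    rfl
  · simp [vinner, one_apply, Pi.single_apply, eq_comm]

theorem exists_isLocalUnitary_prodVec {m n : ℕ} {f : (Fin m → ℂ) →ₗ[ℂ] (Fin m → ℂ)}
    {g : (Fin n → ℂ) →ₗ[ℂ] (Fin n → ℂ)} (hf : ∀ c, ‖toLp 2 (f c)‖ = ‖toLp 2 c‖)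
    (hg : ∀ c, ‖toLp 2 (g c)‖ = ‖toLp 2 c‖) :
    ∃ U, IsLocalUnitary m n U ∧ ∀ a b, prodVec (f a) (g b) = U *ᵥ prodVec a b := by
  refine ⟨_, Or.inl ⟨_, toMatrix'_mem_unitaryGroup hf, _, toMatrix'_mem_unitaryGroup hg, rfl⟩,
    fun a b => ?_⟩
  rw [kronecker_mulVec_prodVec, LinearMap.toMatrix'_mulVec, LinearMap.toMatrix'_mulVec]

theorem le_of_isometric {p q : ℕ} {f : (Fin p → ℂ) →ₗ[ℂ] (Fin q → ℂ)}
    (hf : ∀ c, ‖toLp 2 (f c)‖ = ‖toLp 2 c‖) : p ≤ q := by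
  have hinj : Function.Injective f := (injective_iff_map_eq_zero f).2 fun c hc => by
    simpa [hc] using (hf c).symm
  simpa using LinearMap.finrank_le_finrank_of_injective hinj

theorem exists_isLocalUnitary_prodVec_swap {m n : ℕ} {f : (Fin n → ℂ) →ₗ[ℂ] (Fin m → ℂ)}
    {g : (Fin m → ℂ) →ₗ[ℂ] (Fin n → ℂ)} (hf : ∀ c, ‖toLp 2 (f c)‖ = ‖toLp 2 c‖)
    (hg : ∀ c, ‖toLp 2 (g c)‖ = ‖toLp 2 c‖) :
    ∃ U, IsLocalUnitary m n U ∧ ∀ a b, prodVec (f b) (g a) = U *ᵥ prodVec a b := by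
  obtain rfl : m = n := le_antisymm (le_of_isometric hg) (le_of_isometric hf)
  refine ⟨_, Or.inr ⟨rfl, _, toMatrix'_mem_unitaryGroup hg, _, toMatrix'_mem_unitaryGroup hf, rfl⟩,
    fun a b => ?_⟩
  rw [← mulVec_mulVec, kronecker_mulVec_prodVec, swapMat_mulVec_prodVec,
    LinearMap.toMatrix'_mulVec, LinearMap.toMatrix'_mulVec]

theorem exists_isLocalUnitary_of_pair_eq {N : Type*} {d : N → ℕ} {i j r s : N}
    (h : s(r, s) = s(i, j)) {f : (Fin (d r) → ℂ) →ₗ[ℂ] (Fin (d i) → ℂ)}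
    {g : (Fin (d s) → ℂ) →ₗ[ℂ] (Fin (d j) → ℂ)} (hf : ∀ c, ‖toLp 2 (f c)‖ = ‖toLp 2 c‖)
    (hg : ∀ c, ‖toLp 2 (g c)‖ = ‖toLp 2 c‖) :
    ∃ U, IsLocalUnitary (d i) (d j) U ∧ ∀ a : ∀ i, Fin (d i) → ℂ,
      prodVec (f (a r)) (g (a s)) = U *ᵥ prodVec (a i) (a j) := by
  rcases Sym2.eq_iff.1 h with ⟨rfl, rfl⟩ | ⟨rfl, rfl⟩
  · obtain ⟨U, hU, hfg⟩ := exists_isLocalUnitary_prodVec hf hg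
    exact ⟨U, hU, fun a => hfg _ _⟩
  · obtain ⟨U, hU, hfg⟩ := exists_isLocalUnitary_prodVec_swap hf hg
    exact ⟨U, hU, fun a => hfg _ _⟩

theorem dim_perm_eq_of_isometric {N : Type*} [Finite N] {d : N → ℕ} {ρ : Equiv.Perm N}
    {f : ∀ j, (Fin (d (ρ j)) → ℂ) →ₗ[ℂ] (Fin (d j) → ℂ)}
    (hf : ∀ j c, ‖toLp 2 (f j c)‖ = ‖toLp 2 c‖) (j : N) : d (ρ j) = d j := by
  cases nonempty_fintype N
  exact (Finset.sum_eq_sum_iff_of_le fun j _ => le_of_isometric (hf j)).1 (Equiv.sum_comp ρ d) j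
    (Finset.mem_univ j)

theorem pairing_of_perm : ∀ ρ : Equiv.Perm (Fin 4),
    (s(ρ 0, ρ 1) = s(0, 1) ∧ s(ρ 2, ρ 3) = s(2, 3)) ∨
    (s(ρ 0, ρ 1) = s(2, 3) ∧ s(ρ 2, ρ 3) = s(0, 1)) ∨
    (s(ρ 0, ρ 1) = s(0, 3) ∧ s(ρ 2, ρ 3) = s(2, 1)) ∨
    (s(ρ 0, ρ 1) = s(2, 1) ∧ s(ρ 2, ρ 3) = s(0, 3)) ∨
    (s(ρ 0, ρ 1) = s(0, 2) ∧ s(ρ 2, ρ 3) = s(1, 3)) ∨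
    (s(ρ 0, ρ 1) = s(1, 3) ∧ s(ρ 2, ρ 3) = s(0, 2)) := by
  decide

end SlotPairs

section Rearrangements

open scoped Matrix.Norms.Frobenius

variable {m n k : ℕ}
  {R : Matrix (Fin m × Fin n) (Fin m × Fin n) ℂ → Matrix (Fin m × Fin n) (Fin m × Fin n) ℂ}

/-- `R` sends every `|v⟩⟨w|` with `v`, `w` of Schmidt rank at most `k` to a matrix of rank at most
one. -/
def MapsToRankOne (k : ℕ)
    (R : Matrix (Fin m × Fin n) (Fin m × Fin n) ℂ → Matrix (Fin m × Fin n) (Fin m × Fin n) ℂ) :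
    Prop :=
  ∀ X ∈ schmidtCone (Fin m) (Fin n) k, ∃ v w, R X = vecMulVec v w

/-- A linear map which is generated by `IsIsoGen m n k` as soon as it satisfies `MapsToRankOne k`;
the maps that permute the four slots of a matrix are of this kind. -/
structure IsRankOneRigid (k : ℕ)
    (R : Matrix (Fin m × Fin n) (Fin m × Fin n) ℂ → Matrix (Fin m × Fin n) (Fin m × Fin n) ℂ) :
    Prop where
  isLinearMap : IsLinearMap ℂ R
  isIsoComp : MapsToRankOne k R → IsIsoComp m n k R

theorem MapsToRankOne.mul_apply_eq (hR : MapsToRankOne k R)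
    {X : Matrix (Fin m × Fin n) (Fin m × Fin n) ℂ} (hX : X ∈ schmidtCone (Fin m) (Fin n) k)
    (p p' q q' : Fin m × Fin n) : R X p q * R X p' q' = R X p q' * R X p' q := by
  obtain ⟨v, w, hvw⟩ := hR X hX
  simp only [hvw, vecMulVec_apply]
  ring

/-- The operator `(e i ⊗ e j + e i' ⊗ e j') (e i ⊗ e j)ᵀ`, which separates `k = 1` from `k ≥ 2`. -/
noncomputable def entangledUnit (i i' : Fin m) (j j' : Fin n) :
    Matrix (Fin m × Fin n) (Fin m × Fin n) ℂ :=
  vecMulVec (prodVec (Pi.single i 1) (Pi.single j 1) + prodVec (Pi.single i' 1) (Pi.single j' 1))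
    (prodVec (Pi.single i 1) (Pi.single j 1))

theorem entangledUnit_mem_schmidtCone (hk : 2 ≤ k) (i i' : Fin m) (j j' : Fin n) :
    entangledUnit i i' j j' ∈ schmidtCone (Fin m) (Fin n) k :=
  schmidtCone_mono hk ⟨_, (schmidtRankLE_prodVec _ _).add (schmidtRankLE_prodVec _ _), _,
    (schmidtRankLE_prodVec _ _).mono one_le_two, rfl⟩

theorem isRankOneRigid_id : IsRankOneRigid (m := m) (n := n) k id where
  isLinearMap := LinearMap.id.isLinear
  isIsoComp _ := by
    have hone := isLocalUnitary_one m n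
    convert IsIsoComp.base (k := k) _ (.unitary _ _ hone hone) using 2 with X
    rw [one_mul, mul_one, id]

theorem isRankOneRigid_ptrans [Nontrivial (Fin m)] [Nontrivial (Fin n)] (hk : 1 ≤ k) :
    IsRankOneRigid (m := m) (n := n) k ptrans where
  isLinearMap := ⟨fun _ _ => rfl, fun _ _ => rfl⟩
  isIsoComp h := by
    rcases hk.eq_or_lt with rfl | hk
    · exact .base _ (.ptranspose rfl)
    · obtain ⟨i, i', hi⟩ := exists_pair_ne (Fin m)
      obtain ⟨j, j', hj⟩ := exists_pair_ne (Fin n)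
      have hminor := h.mul_apply_eq (entangledUnit_mem_schmidtCone hk i i' j j')
        (i, j) (i', j) (i, j) (i, j')
      simp [entangledUnit, ptrans, vecMulVec_apply, prodVec, hi, hj, hi.symm, hj.symm] at hminor

theorem realign_eq_mul_swapMat (X : Matrix (Fin m × Fin m) (Fin m × Fin m) ℂ) :
    realign X = ptrans (X * swapMat m m) * swapMat m m := by
  rw [mul_swapMat, mul_swapMat]
  rfl

theorem isRankOneRigid_realign [Nontrivial (Fin m)] (hk : 1 ≤ k) :
    IsRankOneRigid (m := m) (n := m) k realign where
  isLinearMap := ⟨fun _ _ => rfl, fun _ _ => rfl⟩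
  isIsoComp h := by
    rcases hk.eq_or_lt with rfl | hk
    · have hswap : IsIsoComp m m 1 fun X => 1 * X * swapMat m m :=
        .base _ (.unitary _ _ (isLocalUnitary_one m m) (isLocalUnitary_swapMat m))
      convert hswap.comp _ _ (.comp ptrans _ (.base _ (.ptranspose rfl)) hswap)
      ext1 X
      simp only [realign_eq_mul_swapMat, Function.comp_apply, one_mul]
    · obtain ⟨i, i', hi⟩ := exists_pair_ne (Fin m)
      have hminor := h.mul_apply_eq (entangledUnit_mem_schmidtCone hk i i' i i')
        (i, i) (i', i) (i, i) (i', i)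
      simp [entangledUnit, realign, vecMulVec_apply, prodVec, hi, hi.symm] at hminor

theorem IsRankOneRigid.transpose (hR : IsRankOneRigid k R) :
    IsRankOneRigid k fun X => (R X)ᵀ where
  isLinearMap := ((transposeLinearEquiv _ _ ℂ ℂ).toLinearMap ∘ₗ hR.isLinearMap.mk' R).isLinear
  isIsoComp h := .comp _ R (.base _ .transpose) <| hR.isIsoComp fun X hX => by
    obtain ⟨v, w, hvw⟩ := h X hX
    exact ⟨w, v, transpose_injective (hvw.trans (transpose_vecMulVec w v).symm)⟩

theorem IsRankOneRigid.isIsoComp_of_eq_mul (hR : IsRankOneRigid k R)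
    {Θ : Matrix (Fin m × Fin n) (Fin m × Fin n) ℂ →ₗ[ℂ] Matrix (Fin m × Fin n) (Fin m × Fin n) ℂ}
    (hΘ : Set.MapsTo Θ (schmidtCone (Fin m) (Fin n) k) (schmidtCone (Fin m) (Fin n) k))
    {U W : Matrix (Fin m × Fin n) (Fin m × Fin n) ℂ} (hU : IsLocalUnitary m n U)
    (hW : IsLocalUnitary m n W) (h : ∀ a, Θ (slotMatrix m n (pureTensor ℂ _ a)) =
      U * R (slotMatrix m n (pureTensor ℂ _ a)) * Wᵀ) :
    IsIsoComp m n k Θ := by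
  let S := unitarySandwich ⟨U, hU.mem_unitaryGroup⟩ ⟨Wᵀ, hW.transpose.mem_unitaryGroup⟩
  have hΘS : Θ = S.toLinearEquiv.toLinearMap ∘ₗ hR.isLinearMap.mk' R :=
    linearMap_ext_of_pureTensor (D := fun i => Fin (slotDim m n i)) h
  have hrank : MapsToRankOne k R := fun X hX => by
    obtain ⟨v, -, w, -, hvw⟩ := hΘ hX
    refine ⟨Uᴴ *ᵥ v, w ᵥ* Wᵀᴴ, ?_⟩
    rw [← vecMulVec_mul, ← mul_vecMulVec, hvw, hΘS]
    exact (S.symm_apply_apply _).symm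
  rw [hΘS]
  exact .comp _ R (.base _ (.unitary _ _ hU hW.transpose)) (hR.isIsoComp hrank)

end Rearrangements

section Classification

open scoped Matrix.Norms.Frobenius
open WithLp (toLp)

variable {m n k : ℕ}

theorem realign_vecMulVec_prodVec (a c : Fin m → ℂ) (b d : Fin n → ℂ) :
    realign (vecMulVec (prodVec a b) (prodVec c d)) = vecMulVec (prodVec a c) (prodVec b d) := by
  ext p q
  exact mul_mul_mul_comm _ _ _ _

theorem slotMatrix_pureTensor (a : ∀ i, Fin (slotDim m n i) → ℂ) :
    slotMatrix m n (pureTensor ℂ _ a) =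
      vecMulVec (prodVec (ι := Fin m) (κ := Fin n) (a 0) (a 1)) (prodVec (a 2) (a 3)) :=
  tensorToMatrix_pureTensor a

theorem vecMulVec_eq_mul_mul_transpose {A : Type*} [Fintype A] {U W X : Matrix A A ℂ}
    {v v' w w' : A → ℂ} (hv : v' = U *ᵥ v) (hw : w' = W *ᵥ w) (hX : X = vecMulVec v w) :
    vecMulVec v' w' = U * X * Wᵀ := by
  rw [hv, hw, hX, mul_vecMulVec, vecMulVec_mul, vecMul_transpose]

theorem eq_of_pairing_realign {ρ : Equiv.Perm (Fin 4)}
    (hρ : ∀ j, slotDim m n (ρ j) = slotDim m n j)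
    (h : s(ρ 0, ρ 1) = s(0, 2) ∨ s(ρ 0, ρ 1) = s(1, 3)) : m = n := by
  have h0 : slotDim m n (ρ 0) = m := hρ 0
  have h1 : slotDim m n (ρ 1) = n := hρ 1
  rcases h with h | h <;> rcases Sym2.eq_iff.1 h with ⟨e0, e1⟩ | ⟨e0, e1⟩ <;>
    rw [e0] at h0 <;> rw [e1] at h1
  exacts [h1, h1, h0.symm, h0.symm]

theorem exists_isRankOneRigid_of_perm [Nontrivial (Fin m)] [Nontrivial (Fin n)] (hk : 1 ≤ k)
    {ρ : Equiv.Perm (Fin 4)}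
    {f : ∀ j, (Fin (slotDim m n (ρ j)) → ℂ) →ₗ[ℂ] (Fin (slotDim m n j) → ℂ)}
    (hf : ∀ j c, ‖toLp 2 (f j c)‖ = ‖toLp 2 c‖) :
    ∃ R, IsRankOneRigid k R ∧ ∃ U W, IsLocalUnitary m n U ∧ IsLocalUnitary m n W ∧
      ∀ a, slotMatrix m n (pureTensor ℂ _ fun j => f j (a (ρ j))) =
        U * R (slotMatrix m n (pureTensor ℂ _ a)) * Wᵀ := by
  have hdim := dim_perm_eq_of_isometric hf
  simp only [slotMatrix_pureTensor]
  rcases pairing_of_perm ρ with ⟨h₁, h₂⟩ | ⟨h₁, h₂⟩ | ⟨h₁, h₂⟩ | ⟨h₁, h₂⟩ | ⟨h₁, h₂⟩ | ⟨h₁, h₂⟩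
  · obtain ⟨U, hU, hUa⟩ := exists_isLocalUnitary_of_pair_eq (d := slotDim m n) h₁ (hf 0) (hf 1)
    obtain ⟨W, hW, hWa⟩ := exists_isLocalUnitary_of_pair_eq (d := slotDim m n) h₂ (hf 2) (hf 3)
    exact ⟨_, isRankOneRigid_id, U, W, hU, hW, fun a =>
      vecMulVec_eq_mul_mul_transpose (hUa a) (hWa a) rfl⟩
  · obtain ⟨U, hU, hUa⟩ := exists_isLocalUnitary_of_pair_eq (d := slotDim m n) h₁ (hf 0) (hf 1)
    obtain ⟨W, hW, hWa⟩ := exists_isLocalUnitary_of_pair_eq (d := slotDim m n) h₂ (hf 2) (hf 3)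
    exact ⟨_, isRankOneRigid_id.transpose, U, W, hU, hW, fun a =>
      vecMulVec_eq_mul_mul_transpose (hUa a) (hWa a) (transpose_vecMulVec ..)⟩
  · obtain ⟨U, hU, hUa⟩ := exists_isLocalUnitary_of_pair_eq (d := slotDim m n) h₁ (hf 0) (hf 1)
    obtain ⟨W, hW, hWa⟩ := exists_isLocalUnitary_of_pair_eq (d := slotDim m n) h₂ (hf 2) (hf 3)
    exact ⟨_, isRankOneRigid_ptrans hk, U, W, hU, hW, fun a =>
      vecMulVec_eq_mul_mul_transpose (hUa a) (hWa a) (ptrans_vecMulVec_prodVec ..)⟩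
  · obtain ⟨U, hU, hUa⟩ := exists_isLocalUnitary_of_pair_eq (d := slotDim m n) h₁ (hf 0) (hf 1)
    obtain ⟨W, hW, hWa⟩ := exists_isLocalUnitary_of_pair_eq (d := slotDim m n) h₂ (hf 2) (hf 3)
    exact ⟨_, (isRankOneRigid_ptrans hk).transpose, U, W, hU, hW, fun a =>
      vecMulVec_eq_mul_mul_transpose (hUa a) (hWa a)
        ((congrArg _ (ptrans_vecMulVec_prodVec ..)).trans (transpose_vecMulVec ..))⟩
  · obtain rfl : m = n := eq_of_pairing_realign hdim (.inl h₁)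
    obtain ⟨U, hU, hUa⟩ := exists_isLocalUnitary_of_pair_eq (d := slotDim m m) h₁ (hf 0) (hf 1)
    obtain ⟨W, hW, hWa⟩ := exists_isLocalUnitary_of_pair_eq (d := slotDim m m) h₂ (hf 2) (hf 3)
    exact ⟨_, isRankOneRigid_realign hk, U, W, hU, hW, fun a =>
      vecMulVec_eq_mul_mul_transpose (hUa a) (hWa a) (realign_vecMulVec_prodVec ..)⟩
  · obtain rfl : m = n := eq_of_pairing_realign hdim (.inr h₁)
    obtain ⟨U, hU, hUa⟩ := exists_isLocalUnitary_of_pair_eq (d := slotDim m m) h₁ (hf 0) (hf 1)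
    obtain ⟨W, hW, hWa⟩ := exists_isLocalUnitary_of_pair_eq (d := slotDim m m) h₂ (hf 2) (hf 3)
    exact ⟨_, (isRankOneRigid_realign hk).transpose, U, W, hU, hW, fun a =>
      vecMulVec_eq_mul_mul_transpose (hUa a) (hWa a)
        ((congrArg _ (realign_vecMulVec_prodVec ..)).trans (transpose_vecMulVec ..))⟩

theorem isIsoComp_of_mapsTo_schmidtAtoms (hk : 1 ≤ k) (hm : k < m) (hn : k < n)
    {Θ : Matrix (Fin m × Fin n) (Fin m × Fin n) ℂ ≃ₗ[ℂ] Matrix (Fin m × Fin n) (Fin m × Fin n) ℂ}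
    (hΘ : Set.MapsTo Θ (schmidtAtoms (Fin m) (Fin n) k) (schmidtAtoms (Fin m) (Fin n) k))
    (hΘ' : Set.MapsTo Θ.symm (schmidtAtoms (Fin m) (Fin n) k) (schmidtAtoms (Fin m) (Fin n) k)) :
    IsIsoComp m n k Θ := by
  have : Nontrivial (Fin m) := Fin.nontrivial_iff_two_le.2 (by lia)
  have : Nontrivial (Fin n) := Fin.nontrivial_iff_two_le.2 (by lia)
  have hcard {l : ℕ} (hl : k < l) : k < Fintype.card (Fin l) :=
    hl.trans_eq (Fintype.card_fin l).symm
  have hcone := mapsTo_schmidtCone_of_mapsTo_schmidtAtoms (Θ := Θ.toLinearMap) hΘ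
  have hcone' := mapsTo_schmidtCone_of_mapsTo_schmidtAtoms (Θ := Θ.symm.toLinearMap) hΘ'
  obtain ⟨ρ, f, hf, hΘf⟩ := exists_perm_isometric_factors_of_mapsTo
    (mapsTo_schmidtCone_of_le (hcard hm) (hcard hn) Θ.injective hcone hk)
    (mapsTo_schmidtCone_of_le (hcard hm) (hcard hn) Θ.symm.injective hcone' hk)
    fun X hX => norm_map_of_mapsTo_schmidtAtoms (Θ := Θ.toLinearMap) hΘ (schmidtCone_mono hk hX)
  obtain ⟨R, hR, U, W, hU, hW, hRUW⟩ := exists_isRankOneRigid_of_perm hk hf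
  exact hR.isIsoComp_of_eq_mul hcone hU hW fun a => (hΘf a).trans (hRUW a)

end Classification

section Isometries

open LinearMap (adjoint)
open scoped Matrix.Norms.Frobenius

attribute [local instance] hilbertSchmidt

variable {m n k : ℕ}
  {Φ : Matrix (Fin m × Fin n) (Fin m × Fin n) ℂ →ₗ[ℂ] Matrix (Fin m × Fin n) (Fin m × Fin n) ℂ}

theorem isIsoComp_of_adjoint (h : IsIsoComp m n k (adjoint Φ)) : IsIsoComp m n k Φ := by
  obtain ⟨F, hF, hFsymm⟩ := h.exists_linearIsometryEquiv
  have hΦ : ⇑Φ = F.symm := funext fun X => ext_inner_left ℂ fun Y => by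
    rw [← LinearMap.adjoint_inner_left, ← hF, F.inner_map_eq_flip]
  rwa [hΦ]

theorem isIsoComp_adjoint_of_SkNorm_map (hk : 1 ≤ k) (hm : k < m) (hn : k < n)
    (h : ∀ X, SkNorm k (Φ X) = SkNorm k X) : IsIsoComp m n k (adjoint Φ) := by
  have : NeZero m := ⟨by lia⟩
  have : NeZero n := ⟨by lia⟩
  have hG := isAtomSet_schmidtAtoms (I := Fin m) (J := Fin n) hk
  simp only [SkNorm_eq_supportNorm] at h
  let Ψ := LinearEquiv.ofInjectiveEndo Φ (hG.injective_of_supportNorm h)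
  have hsymm (X) : supportNorm ℂ (schmidtAtoms (Fin m) (Fin n) k) (Ψ.symm X) =
      supportNorm ℂ (schmidtAtoms (Fin m) (Fin n) k) X := by
    rw [← h (Ψ.symm X)]
    exact congrArg _ (Ψ.apply_symm_apply X)
  let Θ : Matrix (Fin m × Fin n) (Fin m × Fin n) ℂ ≃ₗ[ℂ] Matrix (Fin m × Fin n) (Fin m × Fin n) ℂ :=
    .ofLinearMap (adjoint Ψ.toLinearMap) (adjoint Ψ.symm.toLinearMap)
      (by rw [← LinearMap.adjoint_comp, LinearEquiv.symm_comp, LinearMap.adjoint_id])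
      (by rw [← LinearMap.adjoint_comp, LinearEquiv.comp_symm, LinearMap.adjoint_id])
  exact isIsoComp_of_mapsTo_schmidtAtoms hk hm hn (Θ := Θ)
    (fun _ => hG.adjoint_mem Ψ h) fun _ => hG.adjoint_mem Ψ.symm hsymm

theorem SkNorm_adjoint_map_of_gammaNorm_map (hk : 1 ≤ k) (hm : k < m) (hn : k < n)
    (h : ∀ X, gammaNorm k (Φ X) = gammaNorm k X) (X) :
    SkNorm k (adjoint Φ X) = SkNorm k X := by
  have : NeZero m := ⟨by lia⟩
  have : NeZero n := ⟨by lia⟩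
  have hG := isAtomSet_schmidtAtoms (I := Fin m) (J := Fin n) hk
  simp only [gammaNorm_eq_atomicNorm] at h
  rw [SkNorm_eq_supportNorm, SkNorm_eq_supportNorm]
  exact hG.supportNorm_adjoint (.ofInjectiveEndo Φ (hG.injective_of_atomicNorm h)) h X

theorem isIsoComp_of_SkNorm_map (hk : 1 ≤ k) (hm : k < m) (hn : k < n)
    (h : ∀ X, SkNorm k (Φ X) = SkNorm k X) : IsIsoComp m n k Φ :=
  isIsoComp_of_adjoint (isIsoComp_adjoint_of_SkNorm_map hk hm hn h)

theorem isIsoComp_of_gammaNorm_map (hk : 1 ≤ k) (hm : k < m) (hn : k < n)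
    (h : ∀ X, gammaNorm k (Φ X) = gammaNorm k X) : IsIsoComp m n k Φ :=
  isIsoComp_of_adjoint
    (isIsoComp_of_SkNorm_map hk hm hn (SkNorm_adjoint_map_of_gammaNorm_map hk hm hn h))

theorem IsIsoComp.SkNorm_map (h : IsIsoComp m n k Φ) (X) : SkNorm k (Φ X) = SkNorm k X := by
  obtain ⟨F, hF, hFsymm⟩ := h.exists_linearIsometryEquiv
  rw [SkNorm_eq_supportNorm, SkNorm_eq_supportNorm, ← hF]
  exact supportNorm_map_of_image_eq F (image_schmidtAtoms_eq_of_isIsoComp (hF ▸ h) hFsymm) X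

theorem IsIsoComp.gammaNorm_map (h : IsIsoComp m n k Φ) (X) :
    gammaNorm k (Φ X) = gammaNorm k X := by
  obtain ⟨F, hF, hFsymm⟩ := h.exists_linearIsometryEquiv
  rw [gammaNorm_eq_atomicNorm, gammaNorm_eq_atomicNorm, ← hF]
  exact atomicNorm_map_of_image_eq F (image_schmidtAtoms_eq_of_isIsoComp (hF ▸ h) hFsymm) X

end Isometries

/-- for a linear map Φ on M_m ⊗ M_n and 1 ≤ k < min(m,n), the following are
equivalent: (a) Φ is an isometry of ‖·‖_{S(k)}; (b) Φ is an isometry of ‖·‖_{γ,k}; (c) Φ is a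
composition of one or more maps of the form X ↦ UXV (U, V local unitaries, possibly with a
swap when m = n), the transpose, and (when k = 1 only) the partial transpose. -/
theorem isometry_SkNorm_iff {m n k : ℕ} (hk1 : 1 ≤ k) (hk : k < min m n)
    (Φ : Matrix (Fin m × Fin n) (Fin m × Fin n) ℂ →ₗ[ℂ]
      Matrix (Fin m × Fin n) (Fin m × Fin n) ℂ) :
    ((∀ X, SkNorm k (Φ X) = SkNorm k X) ↔ (∀ X, gammaNorm k (Φ X) = gammaNorm k X)) ∧
    ((∀ X, SkNorm k (Φ X) = SkNorm k X) ↔ IsIsoComp m n k ⇑Φ) := by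
  obtain ⟨hm, hn⟩ := lt_min_iff.1 hk
  have hSk : (∀ X, SkNorm k (Φ X) = SkNorm k X) ↔ IsIsoComp m n k Φ :=
    ⟨isIsoComp_of_SkNorm_map hk1 hm hn, IsIsoComp.SkNorm_map⟩
  have hγ : (∀ X, gammaNorm k (Φ X) = gammaNorm k X) ↔ IsIsoComp m n k Φ :=
    ⟨isIsoComp_of_gammaNorm_map hk1 hm hn, IsIsoComp.gammaNorm_map⟩
  exact ⟨hSk.trans hγ.symm, hSk⟩

end Ent
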